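/- arXiv:1610.00676 — 6 statements merged into one kernel-verified Lean document; each statement's English description precedes it below -/
import Mathlib

section
/- There exist a constant ε_γ > 0, disjoint finite subsets Ω₁ and Ω₂ of the unit circle {k ∈ ℝ² : |k| = 1}, and, for each j ∈ {1,2} and each k ∈ Ω_j, a smooth positive function γ_k defined on the set B_{ε_γ}(Id) of symmetric 2×2 real matrices R with |R − Id| < ε_γ, such that: (a) 5k ∈ ℤ² for every k ∈ Ω₁ ∪ Ω₂; (b) if k ∈ Ω_j then −k ∈ Ω_j and γ_k = γ_{−k}; (c) for each j ∈ {1,2} and every R ∈ B_{ε_γ}(Id) one has the identity R = (1/2) Σ_{k ∈ Ω_j} γ_k(R)² (k^⊥ ⊗ k^⊥); (d) for all k, k' ∈ Ω_j with k + k' ≠ 0 one has |k + k'| ≥ 1/2. -/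
noncomputable section

open scoped BigOperators

abbrev E2 : Type := EuclideanSpace ℝ (Fin 2)

/-- `k^⊥ = (-k₂, k₁)` -/
def perp (k : E2) : Fin 2 → ℝ := ![-(k 1), k 0]

/-- the 2×2 identity matrix, viewed as `Fin 2 → Fin 2 → ℝ` -/
def idMat : Fin 2 → Fin 2 → ℝ := fun i j => if i = j then 1 else 0

/-- the ball of radius `ε` around the identity, in the symmetric 2×2 real matrices -/
def symBall (ε : ℝ) : Set (Fin 2 → Fin 2 → ℝ) :=
  {R | (∀ i j, R i j = R j i) ∧ dist R idMat < ε}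

/-- coefficient of the diagonal entries -/
def al (x : ℝ) : ℝ :=
  if x = 0 then 1 else if x = 1 then -9/16 else if x = 9/25 then 25/32 else 0

def gg (k : E2) (R : Fin 2 → Fin 2 → ℝ) : ℝ :=
  al (k 0 ^ 2) * R 0 0 + al (k 1 ^ 2) * R 1 1 - 625/288 * (k 0 * k 1) * R 0 1

def gam (k : E2) (R : Fin 2 → Fin 2 → ℝ) : ℝ := Real.sqrt (gg k R)

lemma al0 : al 0 = 1 := by norm_num [al]
lemma al1 : al 1 = -9/16 := by norm_num [al]
lemma al9 : al (9/25) = 25/32 := by norm_num [al]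
lemma al16 : al (16/25) = 0 := by norm_num [al]

lemma E2_ne {a b c d : ℝ} (h : a ≠ c ∨ b ≠ d) : (!₂[a, b] : E2) ≠ !₂[c, d] := by
  intro e
  have h0 := congrArg (fun v : E2 => v 0) e
  have h1 := congrArg (fun v : E2 => v 1) e
  simp at h0 h1
  tauto

lemma E2_neg (a b : ℝ) : -(!₂[a, b] : E2) = !₂[-a, -b] := by
  ext i; fin_cases i <;> simp

open Classical in
def Om1 : Finset E2 :=
  {!₂[1, 0], !₂[-1, 0], !₂[3/5, 4/5], !₂[-(3/5), -(4/5)], !₂[3/5, -(4/5)], !₂[-(3/5), 4/5]}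

open Classical in
def Om2 : Finset E2 :=
  {!₂[0, 1], !₂[0, -1], !₂[4/5, 3/5], !₂[-(4/5), -(3/5)], !₂[4/5, -(3/5)], !₂[-(4/5), 3/5]}

lemma mem1 {k : E2} : k ∈ Om1 ↔ k = !₂[1, 0] ∨ k = !₂[-1, 0] ∨ k = !₂[3/5, 4/5] ∨
    k = !₂[-(3/5), -(4/5)] ∨ k = !₂[3/5, -(4/5)] ∨ k = !₂[-(3/5), 4/5] := by
  simp [Om1]

lemma mem2 {k : E2} : k ∈ Om2 ↔ k = !₂[0, 1] ∨ k = !₂[0, -1] ∨ k = !₂[4/5, 3/5] ∨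
    k = !₂[-(4/5), -(3/5)] ∨ k = !₂[4/5, -(3/5)] ∨ k = !₂[-(4/5), 3/5] := by
  simp [Om2]

lemma sum1 (f : E2 → ℝ) : ∑ k ∈ Om1, f k = f !₂[1, 0] + (f !₂[-1, 0] + (f !₂[3/5, 4/5] +
    (f !₂[-(3/5), -(4/5)] + (f !₂[3/5, -(4/5)] + f !₂[-(3/5), 4/5])))) := by
  classical
  unfold Om1
  rw [Finset.sum_insert, Finset.sum_insert, Finset.sum_insert, Finset.sum_insert,
    Finset.sum_insert, Finset.sum_singleton]
  all_goals
    simp only [Finset.mem_insert, Finset.mem_singleton, not_or]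
    repeat' apply And.intro
    all_goals exact E2_ne (by norm_num)

lemma sum2 (f : E2 → ℝ) : ∑ k ∈ Om2, f k = f !₂[0, 1] + (f !₂[0, -1] + (f !₂[4/5, 3/5] +
    (f !₂[-(4/5), -(3/5)] + (f !₂[4/5, -(3/5)] + f !₂[-(4/5), 3/5])))) := by
  classical
  unfold Om2
  rw [Finset.sum_insert, Finset.sum_insert, Finset.sum_insert, Finset.sum_insert,
    Finset.sum_insert, Finset.sum_singleton]
  all_goals
    simp only [Finset.mem_insert, Finset.mem_singleton, not_or]
    repeat' apply And.intro
    all_goals exact E2_ne (by norm_num)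

lemma gam_neg (k : E2) : gam k = gam (-k) := by
  funext R
  simp [gam, gg]

lemma ball_bd {R : Fin 2 → Fin 2 → ℝ} (h : R ∈ symBall (1/10)) :
    R 1 0 = R 0 1 ∧ |R 0 0 - 1| < 1/10 ∧ |R 1 1 - 1| < 1/10 ∧ |R 0 1| < 1/10 := by
  obtain ⟨hs, hd⟩ := h
  have key : ∀ i j, |R i j - idMat i j| < 1/10 := fun i j => by
    rw [← Real.dist_eq]
    exact lt_of_le_of_lt ((dist_le_pi_dist (R i) (idMat i) j).trans (dist_le_pi_dist R idMat i)) hd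
  refine ⟨hs 1 0, ?_, ?_, ?_⟩
  · simpa [idMat] using key 0 0
  · simpa [idMat] using key 1 1
  · simpa [idMat] using key 0 1

lemma gg_pos {k : E2} (hk : k ∈ Om1 ∨ k ∈ Om2) {R : Fin 2 → Fin 2 → ℝ}
    (h : R ∈ symBall (1/10)) : 0 < gg k R := by
  obtain ⟨-, h0, h1, h2⟩ := ball_bd h
  rw [abs_lt] at h0 h1 h2
  rw [mem1, mem2] at hk
  rcases hk with (hk | hk | hk | hk | hk | hk) | (hk | hk | hk | hk | hk | hk) <;> subst hk <;>
    norm_num [gg, al0, al1, al9, al16] <;> linarith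

lemma gam_sq {k : E2} (hk : k ∈ Om1 ∨ k ∈ Om2) {R : Fin 2 → Fin 2 → ℝ}
    (h : R ∈ symBall (1/10)) : gam k R ^ 2 = gg k R := Real.sq_sqrt (gg_pos hk h).le

lemma gam_smooth {k : E2} (hk : k ∈ Om1 ∨ k ∈ Om2) :
    ContDiffOn ℝ (⊤ : ℕ∞) (gam k) (symBall (1/10)) := by
  unfold gam
  refine ContDiffOn.sqrt ?_ (fun R hR => (gg_pos hk hR).ne')
  unfold gg
  fun_prop

lemma norm_lb (v : E2) (h : 1/4 ≤ v 0 ^ 2 + v 1 ^ 2) : (1 : ℝ) / 2 ≤ ‖v‖ := by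
  rw [EuclideanSpace.norm_eq]
  apply Real.le_sqrt_of_sq_le
  simp [Fin.sum_univ_two]
  linarith

lemma unit_norm (v : E2) (h : v 0 ^ 2 + v 1 ^ 2 = 1) : ‖v‖ = 1 := by
  rw [EuclideanSpace.norm_eq]
  simp [Fin.sum_univ_two, h]

/-- Geometric Lemma: there are two disjoint finite families of unit vectors, with
`5 Ωⱼ ⊂ ℤ²`, together with smooth positive coefficient functions `γ_k` on a ball
of symmetric matrices around the identity, such that every `R` in this ball can be
written as `R = (1/2) ∑_{k ∈ Ω_j} γ_k(R)² (k^⊥ ⊗ k^⊥)`, with `γ_k = γ_{-k}`,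
and such that `|k + k'| ≥ 1/2` whenever `k, k' ∈ Ω_j` and `k + k' ≠ 0`. -/
theorem geometric_lemma :
    ∃ (ε : ℝ) (Ω₁ Ω₂ : Finset E2) (γ : E2 → (Fin 2 → Fin 2 → ℝ) → ℝ),
      0 < ε ∧
      Disjoint Ω₁ Ω₂ ∧
      (∀ Ω ∈ ({Ω₁, Ω₂} : Set (Finset E2)),
        -- Ω consists of unit vectors
        (∀ k ∈ Ω, ‖k‖ = 1) ∧
        -- (a) `5 Ω ⊂ ℤ²`
        (∀ k ∈ Ω, ∀ i : Fin 2, ∃ m : ℤ, 5 * k i = (m : ℝ)) ∧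
        -- (b) symmetry of the family and of the coefficients
        (∀ k ∈ Ω, -k ∈ Ω ∧ γ k = γ (-k)) ∧
        -- the coefficients are smooth and positive on the ball
        (∀ k ∈ Ω, ContDiffOn ℝ (⊤ : ℕ∞) (γ k) (symBall ε) ∧ ∀ R ∈ symBall ε, 0 < γ k R) ∧
        -- (c) the decomposition identity
        (∀ R ∈ symBall ε, ∀ i j : Fin 2,
          R i j = (1 / 2) * ∑ k ∈ Ω, (γ k R) ^ 2 * perp k i * perp k j) ∧
        -- (d) no small sums of non-antipodal wavevectors
        (∀ k ∈ Ω, ∀ k' ∈ Ω, k + k' ≠ 0 → (1 : ℝ) / 2 ≤ ‖k + k'‖)) := by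
  refine ⟨1/10, Om1, Om2, gam, by norm_num, ?_, ?_⟩
  · rw [Finset.disjoint_left]
    intro k h1 h2
    rw [mem1] at h1
    rw [mem2] at h2
    rcases h1 with h | h | h | h | h | h <;> subst h <;>
    rcases h2 with h | h | h | h | h | h <;> exact E2_ne (by norm_num) h
  intro Ω hΩ
  rcases hΩ with rfl | rfl
  · refine ⟨?_, ?_, ?_, fun k hk => ⟨gam_smooth (Or.inl hk), fun R hR => Real.sqrt_pos.2 (gg_pos (Or.inl hk) hR)⟩, ?_, ?_⟩
    · intro k hk
      apply unit_norm
      rcases mem1.1 hk with hk | hk | hk | hk | hk | hk <;> subst hk <;> norm_num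
    · intro k hk i
      rcases mem1.1 hk with hk | hk | hk | hk | hk | hk <;> subst hk <;> fin_cases i <;>
      first
      | (refine ⟨0, ?_⟩; norm_num; done)
      | (refine ⟨3, ?_⟩; norm_num; done)
      | (refine ⟨-3, ?_⟩; norm_num; done)
      | (refine ⟨4, ?_⟩; norm_num; done)
      | (refine ⟨-4, ?_⟩; norm_num; done)
      | (refine ⟨5, ?_⟩; norm_num; done)
      | (refine ⟨-5, ?_⟩; norm_num; done)
    · intro k hk
      refine ⟨?_, gam_neg k⟩
      rw [mem1] at hk ⊢
      rcases hk with hk | hk | hk | hk | hk | hk <;> subst hk <;> rw [E2_neg] <;> simp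
    · intro R hR i j
      have e : ∑ k ∈ Om1, gam k R ^ 2 * perp k i * perp k j
          = ∑ k ∈ Om1, gg k R * perp k i * perp k j :=
        Finset.sum_congr rfl fun k hk => by rw [gam_sq (Or.inl hk) hR]
      rw [e, sum1]
      have hs := (ball_bd hR).1
      fin_cases i <;> fin_cases j <;> norm_num [gg, perp, al0, al1, al9, al16] <;> linarith
    · intro k hk k' hk' hne
      rw [mem1] at hk hk'
      rcases hk with hk | hk | hk | hk | hk | hk <;>
      rcases hk' with hk' | hk' | hk' | hk' | hk' | hk' <;> subst hk <;> subst hk' <;>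
      first
      | (apply norm_lb; norm_num; done)
      | (exfalso; apply hne; ext i; fin_cases i <;> norm_num)
  · refine ⟨?_, ?_, ?_, fun k hk => ⟨gam_smooth (Or.inr hk), fun R hR => Real.sqrt_pos.2 (gg_pos (Or.inr hk) hR)⟩, ?_, ?_⟩
    · intro k hk
      apply unit_norm
      rcases mem2.1 hk with hk | hk | hk | hk | hk | hk <;> subst hk <;> norm_num
    · intro k hk i
      rcases mem2.1 hk with hk | hk | hk | hk | hk | hk <;> subst hk <;> fin_cases i <;>
      first
      | (refine ⟨0, ?_⟩; norm_num; done)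
      | (refine ⟨3, ?_⟩; norm_num; done)
      | (refine ⟨-3, ?_⟩; norm_num; done)
      | (refine ⟨4, ?_⟩; norm_num; done)
      | (refine ⟨-4, ?_⟩; norm_num; done)
      | (refine ⟨5, ?_⟩; norm_num; done)
      | (refine ⟨-5, ?_⟩; norm_num; done)
    · intro k hk
      refine ⟨?_, gam_neg k⟩
      rw [mem2] at hk ⊢
      rcases hk with hk | hk | hk | hk | hk | hk <;> subst hk <;> rw [E2_neg] <;> simp
    · intro R hR i j
      have e : ∑ k ∈ Om2, gam k R ^ 2 * perp k i * perp k j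
          = ∑ k ∈ Om2, gg k R * perp k i * perp k j :=
        Finset.sum_congr rfl fun k hk => by rw [gam_sq (Or.inr hk) hR]
      rw [e, sum2]
      have hs := (ball_bd hR).1
      fin_cases i <;> fin_cases j <;> norm_num [gg, perp, al0, al1, al9, al16] <;> linarith
    · intro k hk k' hk' hne
      rw [mem2] at hk hk'
      rcases hk with hk | hk | hk | hk | hk | hk <;>
      rcases hk' with hk' | hk' | hk' | hk' | hk' | hk' <;> subst hk <;> subst hk' <;>
      first
      | (apply norm_lb; norm_num; done)
      | (exfalso; apply hne; ext i; fin_cases i <;> norm_num)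
end
end

section
/- Let t₀ < T be reals, let u : ℝ² × [t₀,T] → ℝ² be a smooth vector field, 2π-periodic in each space variable, and let f : ℝ² × [t₀,T] → ℝ be a smooth, 2π-periodic-in-space solution of the transport equation ∂_t f + u·∇f = g with f(·,t₀) = f₀, where g is smooth and 2π-periodic in space. Then for every t ∈ [t₀,T]: ‖Df(·,t)‖_{C⁰} ≤ ‖Df₀‖_{C⁰} e^{(t−t₀)‖Du‖_{C⁰}} + ∫_{t₀}^{t} e^{(t−τ)‖Du‖_{C⁰}} ‖Dg(·,τ)‖_{C⁰} dτ, where ‖Du‖_{C⁰} denotes the supremum over ℝ² × [t₀,T] of the norm of the spatial derivative of u. -/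
noncomputable section

open Real MeasureTheory
open scoped BigOperators

/-- `‖Du‖_{C⁰}`: the supremum over `x ∈ ℝ²` and `t ∈ [t₀,T]` of the operator norm
of the spatial derivative of `u`. -/
def supDu (u : E2 × ℝ → E2) (t₀ T : ℝ) : ℝ :=
  ⨆ (x : E2) (s : Set.Icc t₀ T), ‖fderiv ℝ (fun y => u (y, (s : ℝ))) x‖

/-- Periodicity in space. -/
def SpPer {α : Type*} (h : E2 × ℝ → α) : Prop :=
  ∀ (x : E2) (t : ℝ) (i : Fin 2), h (x + (2 * π) • EuclideanSpace.single i 1, t) = h (x, t)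

lemma spPer_rep {α : Type*} {h : E2 × ℝ → α} (hp : SpPer h) (x : E2) :
    ∃ y ∈ Metric.closedBall (0 : E2) (4 * π), ∀ t, h (x, t) = h (y, t) := by
  have hpi := Real.pi_pos
  have key : ∀ (i : Fin 2) (n : ℤ) (z : E2) (t : ℝ),
      h (z - n • ((2 * π) • EuclideanSpace.single i (1 : ℝ)), t) = h (z, t) := by
    intro i n z t
    have : Function.Periodic (fun z : E2 => h (z, t)) ((2 * π) • EuclideanSpace.single i (1 : ℝ)) :=
      fun z => hp z t i
    exact this.sub_zsmul_eq n
  refine ⟨x - ⌊x 0 / (2 * π)⌋ • ((2 * π) • EuclideanSpace.single 0 (1 : ℝ))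
    - ⌊x 1 / (2 * π)⌋ • ((2 * π) • EuclideanSpace.single 1 (1 : ℝ)), ?_, fun t => ?_⟩
  · have b : ∀ r : ℝ, 0 ≤ r - ⌊r / (2 * π)⌋ * (2 * π) ∧ r - ⌊r / (2 * π)⌋ * (2 * π) ≤ 2 * π := by
      intro r
      have h1 := Int.floor_le (r / (2 * π))
      have h2 := (Int.lt_floor_add_one (r / (2 * π))).le
      rw [le_div_iff₀ (by positivity)] at h1
      rw [div_le_iff₀ (by positivity)] at h2
      constructor <;> linarith
    rw [mem_closedBall_zero_iff, EuclideanSpace.norm_eq, Real.sqrt_le_left (by positivity)]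
    obtain ⟨a1, a2⟩ := b (x 0)
    obtain ⟨b1, b2⟩ := b (x 1)
    simp [Fin.sum_univ_two]
    nlinarith
  · rw [key, key]

lemma fderiv_slice {F : Type*} [NormedAddCommGroup F] [NormedSpace ℝ F] {h : E2 × ℝ → F}
    (hh : Differentiable ℝ h) (x : E2) (t : ℝ) :
    fderiv ℝ (fun y => h (y, t)) x = (fderiv ℝ h (x, t)).comp (ContinuousLinearMap.inl ℝ E2 ℝ) :=
  ((hh (x, t)).hasFDerivAt.comp x (hasFDerivAt_prodMk_left x t)).fderiv

/-- norm of the spatial derivative -/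
def nD {F : Type*} [NormedAddCommGroup F] [NormedSpace ℝ F] (h : E2 × ℝ → F) (p : E2 × ℝ) : ℝ :=
  ‖fderiv ℝ (fun y => h (y, p.2)) p.1‖

lemma nD_per {F : Type*} [NormedAddCommGroup F] [NormedSpace ℝ F] {h : E2 × ℝ → F}
    (hp : SpPer h) : SpPer (nD h) := by
  intro x t i
  simp only [nD]
  rw [← fderiv_comp_add_right]
  simp_rw [hp _ t i]

lemma nD_cont {F : Type*} [NormedAddCommGroup F] [NormedSpace ℝ F] {h : E2 × ℝ → F}
    (hh : ContDiff ℝ (⊤ : ℕ∞) h) : Continuous (nD h) := by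
  have : nD h = fun p => ‖(fderiv ℝ h p).comp (ContinuousLinearMap.inl ℝ E2 ℝ)‖ := by
    funext p
    rw [nD, fderiv_slice (hh.differentiable (by simp))]
  rw [this]
  have := hh.continuous_fderiv (by simp)
  fun_prop

lemma spPer_bdd {q : E2 × ℝ → ℝ} (hq : Continuous q) (hp : SpPer q) (a b : ℝ) :
    ∃ C, 0 ≤ C ∧ ∀ x, ∀ t ∈ Set.Icc a b, q (x, t) ≤ C := by
  obtain ⟨C, hC⟩ := (((isCompact_closedBall (0 : E2) (4 * π)).prod
    (isCompact_Icc (a := a) (b := b))).image hq).bddAbove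
  refine ⟨max C 0, le_max_right _ _, fun x t ht => ?_⟩
  obtain ⟨y, hy, h⟩ := spPer_rep hp x
  rw [h t]
  exact le_max_of_le_left (hC ⟨(y, t), ⟨hy, ht⟩, rfl⟩)

lemma spPer_sup_cont {q : E2 × ℝ → ℝ} (hq : Continuous q) (hp : SpPer q) :
    Continuous fun t => ⨆ x, q (x, t) := by
  have := (isCompact_closedBall (0 : E2) (4 * π)).continuous_sSup
    (f := fun (t : ℝ) (x : E2) => q (x, t)) (by
      exact hq.comp (continuous_snd.prodMk continuous_fst))
  convert this using 2 with t
  rw [iSup]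
  congr 1
  ext r
  constructor
  · rintro ⟨x, rfl⟩
    obtain ⟨y, hy, h⟩ := spPer_rep hp x
    exact ⟨y, hy, (h t).symm⟩
  · rintro ⟨x, -, rfl⟩
    exact ⟨x, rfl⟩

lemma le_spPer_sup {q : E2 × ℝ → ℝ} (hq : Continuous q) (hp : SpPer q) (x : E2) (t : ℝ) :
    q (x, t) ≤ ⨆ x, q (x, t) := by
  obtain ⟨C, -, hC⟩ := spPer_bdd hq hp t t
  exact le_ciSup (f := fun x => q (x, t)) ⟨C, by rintro _ ⟨x, rfl⟩; exact hC x t (by simp)⟩ x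

lemma le_supDu {u : E2 × ℝ → E2} (hu : ContDiff ℝ (⊤ : ℕ∞) u) (hp : SpPer u) {t₀ T : ℝ}
    (ht : t₀ ≤ T) (x : E2) {s : ℝ} (hs : s ∈ Set.Icc t₀ T) :
    ‖fderiv ℝ (fun y => u (y, s)) x‖ ≤ supDu u t₀ T := by
  obtain ⟨C, -, hC⟩ := spPer_bdd (nD_cont hu) (nD_per hp) t₀ T
  have : Nonempty (Set.Icc t₀ T) := ⟨⟨t₀, by simp [ht]⟩⟩
  unfold supDu
  refine le_trans ?_ (le_ciSup (f := fun x => ⨆ s : Set.Icc t₀ T,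
    ‖fderiv ℝ (fun y => u (y, (s : ℝ))) x‖) ?_ x)
  · exact le_ciSup (f := fun s : Set.Icc t₀ T => ‖fderiv ℝ (fun y => u (y, (s : ℝ))) x‖)
      ⟨C, by rintro _ ⟨s, rfl⟩; exact hC x s s.2⟩ ⟨s, hs⟩
  · refine ⟨C, ?_⟩
    rintro _ ⟨x, rfl⟩
    exact ciSup_le fun s => hC x s s.2

/-- Existence of characteristics. -/
lemma exists_char {u : E2 × ℝ → E2} (hu : ContDiff ℝ (⊤ : ℕ∞) u) (hp : SpPer u) {t₀ t : ℝ}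
    (ht : t₀ ≤ t) (x : E2) : ∃ X : ℝ → E2, X t = x ∧
      ∀ s ∈ Set.Icc t₀ t, HasDerivWithinAt X (u (X s, s)) (Set.Icc t₀ t) s := by
  obtain ⟨C, hC0, hC⟩ := spPer_bdd (nD_cont hu) (nD_per hp) t₀ t
  obtain ⟨L, hL0, hL⟩ := spPer_bdd (q := fun p => ‖u p‖) hu.continuous.norm
    (fun x t i => by simp only [hp x t i]) t₀ t
  have hPL : IsPicardLindelof (fun s y => u (y, s)) (tmin := t₀) (tmax := t) ⟨t, by simp [ht]⟩ x
      (L.toNNReal * (t - t₀).toNNReal) 0 L.toNNReal C.toNNReal := by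
    refine ⟨fun s hs => ?_, fun y _ => ?_, fun s hs y _ => ?_, ?_⟩
    · apply LipschitzWith.lipschitzOnWith
      apply lipschitzWith_of_nnnorm_fderiv_le (𝕜 := ℝ)
      · exact (hu.differentiable (by simp)).comp (by fun_prop)
      · intro y
        rw [← NNReal.coe_le_coe, Real.coe_toNNReal _ hC0]
        exact hC y s hs
    · exact (hu.continuous.comp (by fun_prop)).continuousOn
    · rw [Real.coe_toNNReal _ hL0]
      exact hL y s hs
    · simp [hL0, ht]
  obtain ⟨X, h1, h2⟩ := hPL.exists_eq_forall_mem_Icc_hasDerivWithinAt₀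
  exact ⟨X, h1, h2⟩

/-- Gronwall with continuous forcing. -/
lemma gronwall_aux {F : Type*} [NormedAddCommGroup F] [NormedSpace ℝ F] {a b M C : ℝ} (hab : a ≤ b)
    {v v' : ℝ → F} {G : ℝ → ℝ} (hG : Continuous G)
    (hv : ∀ s ∈ Set.Icc a b, HasDerivWithinAt v (v' s) (Set.Icc a b) s)
    (hva : ‖v a‖ ≤ C) (hb : ∀ s ∈ Set.Icc a b, ‖v' s‖ ≤ M * ‖v s‖ + G s) :
    ‖v b‖ ≤ C * Real.exp ((b - a) * M) + ∫ τ in a..b, Real.exp ((b - τ) * M) * G τ := by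
  have main : ∀ ε > 0, ‖v b‖ ≤ Real.exp ((b - a) * M) *
      (C + ∫ τ in a..b, Real.exp ((a - τ) * M) * (G τ + ε)) := by
    intro ε hε
    have hc : Continuous fun τ => Real.exp ((a - τ) * M) * (G τ + ε) := by fun_prop
    refine image_norm_le_of_norm_deriv_right_lt_deriv_boundary (a := a) (b := b) (f := v) (f' := v')
      (B := fun s => Real.exp ((s - a) * M) *
        (C + ∫ τ in a..s, Real.exp ((a - τ) * M) * (G τ + ε)))
      (B' := fun s => M * (Real.exp ((s - a) * M) *
        (C + ∫ τ in a..s, Real.exp ((a - τ) * M) * (G τ + ε))) + (G s + ε))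
      (fun s hs => (hv s hs).continuousWithinAt) ?_ (by simpa using hva) ?_ ?_ ⟨hab, le_rfl⟩
    · intro s hs
      have := (hv s ⟨hs.1, hs.2.le⟩)
      exact this.mono_of_mem_nhdsWithin (Filter.mem_of_superset (Icc_mem_nhdsGE hs.2)
        (Set.Icc_subset_Icc_left hs.1))
    · intro s
      have h1 : HasDerivAt (fun s => Real.exp ((s - a) * M)) (Real.exp ((s - a) * M) * (1 * M)) s :=
        (((hasDerivAt_id s).sub_const a).mul_const M).exp
      have h2 := (hc.integral_hasStrictDerivAt a s).hasDerivAt.const_add C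
      have : Real.exp ((s - a) * M) * Real.exp ((a - s) * M) = 1 := by
        rw [← Real.exp_add]; simp [← add_mul]
      refine (h1.mul h2).congr_deriv ?_
      linear_combination (G s + ε) * this
    · intro s hs h
      have := hb s ⟨hs.1, hs.2.le⟩
      rw [h] at this
      linarith
  have lim : Filter.Tendsto (fun ε : ℝ => Real.exp ((b - a) * M) *
      (C + ((∫ τ in a..b, Real.exp ((a - τ) * M) * G τ) +
        ε * ∫ τ in a..b, Real.exp ((a - τ) * M)))) (nhdsWithin 0 (Set.Ioi 0))
      (nhds (Real.exp ((b - a) * M) *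
      (C + ((∫ τ in a..b, Real.exp ((a - τ) * M) * G τ) +
        0 * ∫ τ in a..b, Real.exp ((a - τ) * M))))) := by
    apply Filter.Tendsto.mono_left _ nhdsWithin_le_nhds
    apply Continuous.tendsto
    fun_prop
  have := ge_of_tendsto lim (b := ‖v b‖) (by
    filter_upwards [self_mem_nhdsWithin] with ε hε
    refine (main ε hε).trans (le_of_eq ?_)
    congr 2
    symm
    rw [← intervalIntegral.integral_const_mul, ← intervalIntegral.integral_add]
    · congr 1; ext τ; ring
    · exact Continuous.intervalIntegrable (by fun_prop) _ _
    · exact Continuous.intervalIntegrable (by fun_prop) _ _)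
  refine this.trans (le_of_eq ?_)
  rw [zero_mul, add_zero, mul_add, mul_comm, ← intervalIntegral.integral_const_mul]
  congr 2
  ext τ
  rw [← mul_assoc, ← Real.exp_add]
  ring_nf

/-- First-derivative transport estimate for `∂ₜ f + u·∇f = g`:
`‖Df(·,t)‖_{C⁰} ≤ ‖Df₀‖_{C⁰} e^{(t−t₀)‖Du‖_{C⁰}} + ∫_{t₀}^t e^{(t−τ)‖Du‖_{C⁰}} ‖Dg(·,τ)‖_{C⁰} dτ`. -/
theorem transport_first_derivative_estimate (t₀ T : ℝ) (ht : t₀ < T)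
    (u : E2 × ℝ → E2) (f g : E2 × ℝ → ℝ) (f₀ : E2 → ℝ)
    (hu : ContDiff ℝ (⊤ : ℕ∞) u)
    (huper : ∀ (x : E2) (t : ℝ) (i : Fin 2),
      u (x + (2 * π) • EuclideanSpace.single i 1, t) = u (x, t))
    (hf : ContDiff ℝ (⊤ : ℕ∞) f)
    (hfper : ∀ (x : E2) (t : ℝ) (i : Fin 2),
      f (x + (2 * π) • EuclideanSpace.single i 1, t) = f (x, t))
    (hg : ContDiff ℝ (⊤ : ℕ∞) g)
    (hgper : ∀ (x : E2) (t : ℝ) (i : Fin 2),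
      g (x + (2 * π) • EuclideanSpace.single i 1, t) = g (x, t))
    (hf0 : ∀ x, f (x, t₀) = f₀ x)
    (heq : ∀ (x : E2), ∀ t ∈ Set.Icc t₀ T,
      deriv (fun s => f (x, s)) t + fderiv ℝ (fun y => f (y, t)) x (u (x, t)) = g (x, t)) :
    ∀ t ∈ Set.Icc t₀ T,
      (⨆ x : E2, ‖fderiv ℝ (fun y => f (y, t)) x‖)
        ≤ (⨆ x : E2, ‖fderiv ℝ f₀ x‖) * Real.exp ((t - t₀) * supDu u t₀ T)
          + ∫ τ in t₀..t,
              Real.exp ((t - τ) * supDu u t₀ T) *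
                (⨆ x : E2, ‖fderiv ℝ (fun y => g (y, τ)) x‖) := by
  intro t htt
  have hfd : Differentiable ℝ f := hf.differentiable (by simp)
  have hud : Differentiable ℝ u := hu.differentiable (by simp)
  have hgd : Differentiable ℝ g := hg.differentiable (by simp)
  have hf'd : Differentiable ℝ (fderiv ℝ f) :=
    (hf.fderiv_right (m := (⊤ : ℕ∞)) (by simp)).differentiable (by simp)
  refine ciSup_le fun x => ?_
  obtain ⟨X, hXt, hX⟩ := exists_char hu huper htt.1 x
  have hf₀ : f₀ = fun y => f (y, t₀) := funext fun y => (hf0 y).symm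
  -- the linearised equation
  have lin : ∀ y, ∀ s ∈ Set.Icc t₀ T, ∀ h : E2,
      fderiv ℝ (fderiv ℝ f) (y, s) (u (y, s), 1) (h, 0)
        = fderiv ℝ (fun z => g (z, s)) y h
          - fderiv ℝ (fun z => f (z, s)) y (fderiv ℝ (fun z => u (z, s)) y h) := by
    intro y s hs h
    have sym : fderiv ℝ (fderiv ℝ f) (y, s) (u (y, s), 1) (h, 0)
        = fderiv ℝ (fderiv ℝ f) (y, s) (h, 0) (u (y, s), 1) :=
      second_derivative_symmetric (f := f) (fun p => (hfd p).hasFDerivAt) (hf'd (y, s)).hasFDerivAt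
        _ _
    have e : (fun z => fderiv ℝ f (z, s) (u (z, s), 1)) = fun z => g (z, s) := by
      funext z
      rw [← heq z s hs, fderiv_slice hfd]
      have hd : HasDerivAt (fun r => f (z, r)) (fderiv ℝ f (z, s) (0, 1)) s := by
        have := (hfd (z, s)).hasFDerivAt.comp_hasDerivAt s
          ((hasDerivAt_const s z).prodMk (hasDerivAt_id s))
        exact this
      rw [hd.deriv]
      simp only [ContinuousLinearMap.comp_apply, ContinuousLinearMap.inl_apply]
      rw [← map_add]
      simp
    have d1 : HasFDerivAt (fun z => fderiv ℝ f (z, s))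
        ((fderiv ℝ (fderiv ℝ f) (y, s)).comp (ContinuousLinearMap.inl ℝ E2 ℝ)) y :=
      (hf'd (y, s)).hasFDerivAt.comp y (hasFDerivAt_prodMk_left y s)
    have d2 : HasFDerivAt (fun z => (u (z, s), (1 : ℝ)))
        ((fderiv ℝ (fun z => u (z, s)) y).prod 0) y := by
      refine HasFDerivAt.prodMk ?_ (hasFDerivAt_const _ _)
      exact (hud.comp (by fun_prop : Differentiable ℝ fun z : E2 => (z, s)) y).hasFDerivAt
    have d3 := (d1.clm_apply d2).fderiv
    rw [e] at d3
    rw [sym, d3, fderiv_slice hfd]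
    simp
  have hG : Continuous fun τ => ⨆ y : E2, ‖fderiv ℝ (fun z => g (z, τ)) y‖ :=
    spPer_sup_cont (nD_cont hg) (nD_per hgper)
  have sub : ∀ s ∈ Set.Icc t₀ t, s ∈ Set.Icc t₀ T := fun s hs => ⟨hs.1, hs.2.trans htt.2⟩
  have res := gronwall_aux (a := t₀) (b := t) (M := supDu u t₀ T)
    (C := ⨆ y : E2, ‖fderiv ℝ f₀ y‖)
    (v := fun s => (fderiv ℝ f (X s, s)).comp (ContinuousLinearMap.inl ℝ E2 ℝ))
    (v' := fun s => (fderiv ℝ (fderiv ℝ f) (X s, s) (u (X s, s), 1)).comp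
      (ContinuousLinearMap.inl ℝ E2 ℝ))
    (G := fun τ => ⨆ y : E2, ‖fderiv ℝ (fun z => g (z, τ)) y‖) htt.1 hG ?_ ?_ ?_
  · simp only at res
    rw [← fderiv_slice hfd, hXt] at res
    exact res
  · intro s hs
    have h1 : HasDerivWithinAt (fun r => fderiv ℝ f (X r, r))
        (fderiv ℝ (fderiv ℝ f) (X s, s) (u (X s, s), 1)) (Set.Icc t₀ t) s :=
      HasFDerivAt.comp_hasDerivWithinAt (f := fun r => (X r, r)) s (hf'd (X s, s)).hasFDerivAt
        ((hX s hs).prodMk (hasDerivWithinAt_id s _))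
    exact (((ContinuousLinearMap.compL ℝ E2 (E2 × ℝ) ℝ).flip
      (ContinuousLinearMap.inl ℝ E2 ℝ)).hasFDerivAt).comp_hasDerivWithinAt s h1
  · simp only
    rw [← fderiv_slice hfd, hf₀]
    exact le_spPer_sup (nD_cont hf) (nD_per hfper) (X t₀) t₀
  · intro s hs
    have hM := le_supDu hu huper ht.le (X s) (sub s hs)
    have hM0 : 0 ≤ supDu u t₀ T := (norm_nonneg _).trans hM
    have hGs : ‖fderiv ℝ (fun z => g (z, s)) (X s)‖ ≤ _ :=
      le_spPer_sup (nD_cont hg) (nD_per hgper) (X s) s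
    have hGs' : ‖fderiv ℝ (fun z => g (z, s)) (X s)‖
      ≤ ⨆ y : E2, ‖fderiv ℝ (fun z => g (z, s)) y‖ := hGs
    simp only
    rw [← fderiv_slice hfd]
    refine ContinuousLinearMap.opNorm_le_bound _
      (add_nonneg (by positivity) ((norm_nonneg _).trans hGs')) fun h => ?_
    rw [ContinuousLinearMap.comp_apply, ContinuousLinearMap.inl_apply, lin _ s (sub s hs)]
    set A := fderiv ℝ (fun z => f (z, s)) (X s)
    set D := fderiv ℝ (fun z => u (z, s)) (X s)
    calc _ ≤ ‖fderiv ℝ (fun z => g (z, s)) (X s) h‖ + ‖A (D h)‖ := norm_sub_le _ _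
      _ ≤ (⨆ y : E2, ‖fderiv ℝ (fun z => g (z, s)) y‖) * ‖h‖
          + ‖A‖ * (supDu u t₀ T * ‖h‖) := by
        gcongr
        · exact (ContinuousLinearMap.le_opNorm _ _).trans (by gcongr)
        · exact (A.le_opNorm _).trans (by
            gcongr
            exact (D.le_opNorm _).trans (by gcongr))
      _ = _ := by ring
end
end

section
/- For every integer N ≥ 2 there exists a constant C = C(N) with the following property. Let t₀ < T be reals, let u : ℝ² × [t₀,T] → ℝ² be a smooth vector field, 2π-periodic in each space variable, and let f : ℝ² × [t₀,T] → ℝ be a smooth, 2π-periodic-in-space solution of the transport equation ∂_t f + u·∇f = g with f(·,t₀) = f₀, where g is smooth and 2π-periodic in space. Then for every t ∈ [t₀,T]: ‖D^N f(·,t)‖_{C⁰} ≤ ( ‖D^N f₀‖_{C⁰} + C (t−t₀) ‖D^N u‖_{C⁰} ‖Df₀‖_{C⁰} ) e^{C (t−t₀) ‖Du‖_{C⁰}} + ∫_{t₀}^{t} e^{C (t−τ) ‖Du‖_{C⁰}} ( ‖D^N g(·,τ)‖_{C⁰} + C (t−τ) ‖D^N u‖_{C⁰} ‖Dg(·,τ)‖_{C⁰}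 ) dτ, where ‖D^j u‖_{C⁰} denotes the supremum over ℝ² × [t₀,T] of the norm of the j-th spatial derivative of u. -/
noncomputable section

open Real MeasureTheory
open scoped BigOperators

/-- `‖D^N u‖_{C⁰}`: supremum over `x ∈ ℝ²`, `t ∈ [t₀,T]` of the norm of the `N`-th
spatial derivative of `u`. -/
def supDNu (N : ℕ) (u : E2 × ℝ → E2) (t₀ T : ℝ) : ℝ :=
  ⨆ (x : E2) (s : Set.Icc t₀ T), ‖iteratedFDeriv ℝ N (fun y => u (y, (s : ℝ))) x‖

section helpers

open Set Metric Filter Topology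

/-- Landau inequality. -/
lemma th_landau {E F : Type*} [NormedAddCommGroup E] [NormedSpace ℝ E]
    [NormedAddCommGroup F] [NormedSpace ℝ F] (h : E → F) (hd : Differentiable ℝ h)
    (A B : ℝ) (hA : ∀ x, ‖h x‖ ≤ A) (hB0 : 0 ≤ B)
    (hB : ∀ x y, ‖fderiv ℝ h x - fderiv ℝ h y‖ ≤ B * ‖x - y‖) (x : E) :
    ‖fderiv ℝ h x‖ ^ 2 ≤ 8 * (A * B) := by
  have hA0 : 0 ≤ A := (norm_nonneg _).trans (hA x)
  have key : ∀ r : ℝ, 0 < r → r * ‖fderiv ℝ h x‖ ≤ 2 * A + B * r ^ 2 := by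
    intro r hr
    have h1 : ‖fderiv ℝ h x‖ ≤ (2 * A + B * r ^ 2) / r := by
      refine ContinuousLinearMap.opNorm_le_of_unit_norm (by positivity) ?_
      intro v hv
      have h2 : ‖h (x + r • v) - h x - fderiv ℝ h x ((x + r • v) - x)‖
          ≤ (B * r) * ‖(x + r • v) - x‖ := by
        refine (convex_closedBall x r).norm_image_sub_le_of_norm_fderiv_le'
          (fun y _ => hd y) ?_ (mem_closedBall_self hr.le) ?_
        · intro y hy
          refine (hB y x).trans ?_
          gcongr
          simpa [dist_eq_norm] using hy
        · simp [norm_smul, hv, abs_of_pos hr]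
      have h3 : ‖(x + r • v) - x‖ = r := by simp [norm_smul, hv, abs_of_pos hr]
      rw [h3] at h2
      simp only [add_sub_cancel_left, map_smul] at h2
      rw [le_div_iff₀ hr]
      have h4 : ‖r • fderiv ℝ h x v‖ = ‖fderiv ℝ h x v‖ * r := by
        rw [norm_smul, Real.norm_of_nonneg hr.le, mul_comm]
      rw [← h4]
      have h5 : r • fderiv ℝ h x v = h (x + r • v) - h x
          - (h (x + r • v) - h x - r • fderiv ℝ h x v) := by abel
      rw [h5]
      refine (norm_sub_le _ _).trans ?_
      have := norm_sub_le (h (x + r • v)) (h x)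
      have := hA (x + r • v)
      have := hA x
      nlinarith
    rw [le_div_iff₀ hr] at h1
    linarith
  set p := ‖fderiv ℝ h x‖ with hp
  have hp0 : 0 ≤ p := norm_nonneg _
  rcases hB0.eq_or_lt with hB0 | hB0
  · rw [← hB0] at key ⊢
    by_contra hcon
    have hp1 : 0 < p := by
      rcases hp0.eq_or_lt with h | h
      · rw [← h] at hcon; simp at hcon
      · exact h
    have := key ((2 * A + 1) / p) (by positivity)
    rw [div_mul_cancel₀ _ hp1.ne'] at this
    linarith
  · rcases hp0.eq_or_lt with h | h
    · rw [← h]; simp; positivity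
    · have := key (p / (2 * B)) (by positivity)
      have e1 : p / (2 * B) * p = p ^ 2 / (2 * B) := by ring
      have e2 : B * (p / (2 * B)) ^ 2 = p ^ 2 / (4 * B) := by field_simp; ring
      rw [e1, e2] at this
      have e3 : p ^ 2 / (2 * B) - p ^ 2 / (4 * B) = p ^ 2 / (4 * B) := by field_simp; ring
      have e4 : p ^ 2 / (4 * B) ≤ 2 * A := by linarith
      rw [div_le_iff₀ (by positivity)] at e4
      linarith

/-- Discrete maximum principle for log-convex sequences on `[1,N]`. -/
lemma th_logconvex (N : ℕ) (hN : 1 ≤ N) (c : ℕ → ℝ) (h0 : ∀ j, 0 ≤ c j)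
    (h : ∀ j, 1 < j → j < N → c j ^ 2 ≤ c (j - 1) * c (j + 1)) (j : ℕ) (h1 : 1 ≤ j)
    (h2 : j ≤ N) : c j ≤ c 1 + c N := by
  by_contra hcon
  push Not at hcon
  have hne : (Finset.Icc 1 N).Nonempty := ⟨1, by simp [hN]⟩
  obtain ⟨m, hm, hmax⟩ := Finset.exists_max_image (Finset.Icc 1 N) c hne
  have hex : ∃ k, 1 ≤ k ∧ k ≤ N ∧ c k = c m := ⟨m, by simp at hm; exact ⟨hm.1, hm.2, rfl⟩⟩
  classical
  obtain ⟨k1, k2, k3⟩ := Nat.find_spec hex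
  have kmin : ∀ i, i < Nat.find hex → _ := fun i hi => Nat.find_min hex hi
  set k := Nat.find hex with hk
  have hjm := hmax j (by simp [h1, h2])
  have ck : c 1 + c N < c k := by linarith
  have hk1 : k ≠ 1 := by
    intro e; rw [e] at ck; linarith [h0 N]
  have hkN : k ≠ N := by
    intro e; rw [e] at ck; linarith [h0 1]
  have a1 := h k (by omega) (by omega)
  have a2 := hmax (k + 1) (by simp; omega)
  have a3 := hmax (k - 1) (by simp; omega)
  have a4 : c (k - 1) ≠ c m := fun e => kmin (k - 1) (by omega) ⟨by omega, by omega, e⟩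
  have a5 : c (k - 1) < c k := by rw [k3]; exact lt_of_le_of_ne a3 a4
  have : 0 < c k := by linarith [h0 1, h0 N]
  nlinarith [h0 (k - 1), h0 (k + 1)]

lemma th_logconvex' (N : ℕ) (hN : 1 ≤ N) (c : ℕ → ℝ) (h0 : ∀ j, 0 ≤ c j)
    (h : ∀ j, 1 < j → j < N → c j ^ 2 ≤ 64 * (c (j - 1) * c (j + 1))) (j : ℕ) (h1 : 1 ≤ j)
    (h2 : j ≤ N) : c j ≤ 8 ^ (N ^ 2) * (c 1 + c N) := by
  have := th_logconvex N hN (fun j => 8 ^ (j ^ 2) * c j) (fun j => mul_nonneg (by positivity) (h0 j))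
    ?_ j h1 h2
  · calc c j ≤ 8 ^ (j ^ 2) * c j := by
          refine le_mul_of_one_le_left (h0 j) (one_le_pow₀ (by norm_num))
      _ ≤ _ := this
      _ ≤ 8 ^ (N ^ 2) * c 1 + 8 ^ (N ^ 2) * c N := by
          have := h0 1
          gcongr
          norm_num
      _ = _ := by ring
  · intro j hj1 hj2
    obtain ⟨i, rfl⟩ : ∃ i, j = i + 1 := ⟨j - 1, by omega⟩
    have := h _ hj1 hj2
    simp only [Nat.add_sub_cancel] at this ⊢
    calc (8 ^ ((i + 1) ^ 2) * c (i + 1)) ^ 2 = (8 ^ ((i + 1) ^ 2)) ^ 2 * c (i + 1) ^ 2 := by ring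
      _ ≤ (8 ^ ((i + 1) ^ 2)) ^ 2 * (64 * (c i * c (i + 1 + 1))) := by gcongr
      _ = _ := by ring

/-- Interpolation, for derivative sequences of bounds. -/
lemma th_interp (N : ℕ) (hN : 1 ≤ N) (A B : ℕ → ℝ) (hA0 : ∀ j, 0 ≤ A j) (hB0 : ∀ j, 0 ≤ B j)
    (hA : ∀ j, A (j + 1) ^ 2 ≤ 8 * (A j * A (j + 2)))
    (hB : ∀ j, B (j + 1) ^ 2 ≤ 8 * (B j * B (j + 2))) (j : ℕ) (h1 : 1 ≤ j) (h2 : j ≤ N) :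
    A j * B (N + 1 - j) ≤ 8 ^ (N ^ 2) * (A 1 * B N + A N * B 1) := by
  have := th_logconvex' N hN (fun j => A j * B (N + 1 - j))
    (fun j => mul_nonneg (hA0 _) (hB0 _)) ?_ j h1 h2
  · simpa using this
  · intro j hj1 hj2
    obtain ⟨i, rfl⟩ : ∃ i, j = i + 1 := ⟨j - 1, by omega⟩
    obtain ⟨k, rfl⟩ : ∃ k, N = i + k + 1 := ⟨N - 1 - i, by omega⟩
    obtain ⟨l, rfl⟩ : ∃ l, k = l + 1 := ⟨k - 1, by omega⟩
    have e1 : i + (l + 1) + 1 + 1 - (i + 1) = l + 1 + 1 := by omega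
    have e2 : i + (l + 1) + 1 + 1 - (i + 1 - 1) = l + 2 + 1 := by omega
    have e3 : i + (l + 1) + 1 + 1 - (i + 1 + 1) = l + 1 := by omega
    simp only [e1, e2, e3]
    have a := hA i
    have b := hB (l + 1)
    have a0 := sq_nonneg (A (i + 1))
    have b0 := sq_nonneg (B (l + 1 + 1))
    have := mul_le_mul a b b0 (a0.trans a)
    simp only [Nat.add_sub_cancel]
    calc _ = A (i + 1) ^ 2 * B (l + 1 + 1) ^ 2 := by ring
      _ ≤ _ := this
      _ = _ := by ring_nf

/-- derivatives commute with iterated derivatives -/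
lemma th_fderiv_iteratedFDeriv {V W : Type*} [NormedAddCommGroup V] [NormedSpace ℝ V]
    [NormedAddCommGroup W] [NormedSpace ℝ W] (w : V) (N : ℕ) :
    ∀ (F : V → W), ContDiff ℝ (⊤ : ℕ∞) F → ∀ (z : V) (m : Fin N → V),
    fderiv ℝ (iteratedFDeriv ℝ N F) z w m = iteratedFDeriv ℝ N (fun y => fderiv ℝ F y w) z m := by
  have hdiff : ∀ (n : ℕ) (G : V → W), ContDiff ℝ (⊤ : ℕ∞) G →
      Differentiable ℝ (iteratedFDeriv ℝ n G) := fun n G hG =>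
    hG.differentiable_iteratedFDeriv (by exact_mod_cast WithTop.coe_lt_top n)
  have hL : ∀ (n : ℕ) (G : V → W), ContDiff ℝ (⊤ : ℕ∞) G → ∀ (z : V) (m : Fin n → V) (w : V),
      fderiv ℝ (fun y => iteratedFDeriv ℝ n G y m) z w = fderiv ℝ (iteratedFDeriv ℝ n G) z w m := by
    intro n G hG z m w
    have := ((ContinuousMultilinearMap.apply ℝ (fun _ : Fin n => V) W m).hasFDerivAt.comp z
      (hdiff n G hG z).hasFDerivAt)
    have h2 : HasFDerivAt (fun y => iteratedFDeriv ℝ n G y m) _ z := this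
    rw [h2.fderiv]
    simp
  induction N generalizing w with
  | zero =>
    intro F hF z m
    rw [← hL 0 F hF]
    simp
  | succ N ih =>
    intro F hF z m
    have hdir : ∀ w : V, ContDiff ℝ (⊤ : ℕ∞) (fun y => fderiv ℝ F y w) := fun w =>
      (hF.fderiv_right (m := (⊤ : ℕ∞)) (by simp)).clm_apply contDiff_const
    rw [← hL (N + 1) F hF]
    have e1 : (fun y => iteratedFDeriv ℝ (N + 1) F y m)
        = fun y => iteratedFDeriv ℝ N (fun y => fderiv ℝ F y (m 0)) y (Fin.tail m) := by
      ext y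
      rw [iteratedFDeriv_succ_apply_left, ih (m 0) F hF]
    rw [e1, hL N _ (hdir _), ih w _ (hdir _), iteratedFDeriv_succ_apply_left, ih (m 0) _ (hdir _)]
    have hd2 : Differentiable ℝ (fderiv ℝ F) :=
      (hF.fderiv_right (m := (⊤ : ℕ∞)) (by simp)).differentiable (by simp)
    have e2 : ∀ a b : V, ∀ y, fderiv ℝ (fun y => fderiv ℝ F y a) y b
        = fderiv ℝ (fderiv ℝ F) y b a := by
      intro a b y
      rw [fderiv_clm_apply (hd2 y) (differentiableAt_const a)]
      simp
    have e3 : (fun y => fderiv ℝ (fun y => fderiv ℝ F y (m 0)) y w)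
        = (fun y => fderiv ℝ (fun y => fderiv ℝ F y w) y (m 0)) := by
      ext y
      rw [e2, e2]
      exact (hF.contDiffAt.isSymmSndFDerivAt (by
        simp only [minSmoothness_of_isRCLikeNormedField]
        exact WithTop.coe_le_coe.2 (le_top (a := (2 : ℕ∞))))) w (m 0)
    rw [e3]

/-- spatial periodicity -/
def thPer {V : Type*} (F : E2 × ℝ → V) : Prop := ∀ (x : E2) (t : ℝ) (i : Fin 2),
      F (x + (2 * π) • EuclideanSpace.single i 1, t) = F (x, t)

/-- sup over space of the norm of the `k`-th spatial derivative at time `s` -/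
def thS {V : Type*} [NormedAddCommGroup V] [NormedSpace ℝ V] (k : ℕ) (F : E2 × ℝ → V) (s : ℝ) : ℝ :=
  ⨆ x : E2, ‖iteratedFDeriv ℝ k (fun y => F (y, s)) x‖

lemma th_box (x : E2) : ∃ y ∈ closedBall (0 : E2) (4 * π), ∀ {α : Type} (H : E2 → α),
    (∀ (x : E2) (i : Fin 2), H (x + (2 * π) • EuclideanSpace.single i 1) = H x) → H x = H y := by
  have hpi := Real.pi_pos
  let c : Fin 2 → E2 := fun i => (2 * π) • EuclideanSpace.single i 1
  let n : Fin 2 → ℤ := fun i => ⌊x i / (2 * π)⌋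
  refine ⟨x - n 0 • c 0 - n 1 • c 1, ?_, ?_⟩
  · have hb : ∀ i, 0 ≤ x i - n i * (2 * π) ∧ x i - n i * (2 * π) ≤ 2 * π := by
      intro i
      have h1 := Int.floor_le (x i / (2 * π))
      have h2 := (Int.lt_floor_add_one (x i / (2 * π))).le
      rw [le_div_iff₀ (by positivity)] at h1
      rw [div_le_iff₀ (by positivity)] at h2
      simp only [n]
      constructor <;> linarith
    rw [mem_closedBall_zero_iff]
    refine le_of_sq_le_sq ?_ (by positivity)
    rw [EuclideanSpace.norm_sq_eq]
    have h0 := hb 0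
    have h1 := hb 1
    simp only [Fin.sum_univ_two, c]
    simp
    generalize x 0 - n 0 * (2 * π) = a at *
    generalize x 1 - n 1 * (2 * π) = b at *
    nlinarith
  · intro α H hH
    have p : ∀ i, Function.Periodic H (c i) := fun i x => hH x i
    rw [((p 1).zsmul (n 1)).sub_eq, ((p 0).zsmul (n 0)).sub_eq]

lemma th_slice {V : Type*} [NormedAddCommGroup V] [NormedSpace ℝ V] (k : ℕ) (F : E2 × ℝ → V)
    (hF : ContDiff ℝ (⊤ : ℕ∞) F) (x : E2) (s : ℝ) :
    iteratedFDeriv ℝ k (fun y => F (y, s)) x =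
      (iteratedFDeriv ℝ k F (x, s)).compContinuousLinearMap
        (fun _ => ContinuousLinearMap.inl ℝ E2 ℝ) := by
  have h1 : (fun y => F (y, s)) = (fun z => F (z + (0, s))) ∘ (ContinuousLinearMap.inl ℝ E2 ℝ) := by
    ext y; simp
  have h2 : ContDiff ℝ (⊤ : ℕ∞) (fun z => F (z + ((0 : E2), s))) :=
    hF.comp (contDiff_id.add contDiff_const)
  rw [h1, ContinuousLinearMap.iteratedFDeriv_comp_right _ h2 x
    (WithTop.coe_le_coe.2 (le_top (a := (k : ℕ∞)))), iteratedFDeriv_comp_add_right]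
  simp

lemma th_slice_cont {V : Type*} [NormedAddCommGroup V] [NormedSpace ℝ V] (k : ℕ) (F : E2 × ℝ → V)
    (hF : ContDiff ℝ (⊤ : ℕ∞) F) :
    Continuous (fun p : ℝ × E2 => ‖iteratedFDeriv ℝ k (fun y => F (y, p.1)) p.2‖) := by
  simp_rw [th_slice k F hF]
  refine continuous_norm.comp ?_
  have h1 : Continuous (iteratedFDeriv ℝ k F) := hF.continuous_iteratedFDeriv
    (WithTop.coe_le_coe.2 (le_top (a := (k : ℕ∞))))
  exact (ContinuousMultilinearMap.compContinuousLinearMapL (𝕜 := ℝ) (F := V)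
    (fun _ : Fin k => ContinuousLinearMap.inl ℝ E2 ℝ)).continuous.comp
      (h1.comp (continuous_snd.prodMk continuous_fst))

lemma th_slice_box {V : Type*} [NormedAddCommGroup V] [NormedSpace ℝ V] (k : ℕ) (F : E2 × ℝ → V)
    (hP : thPer F) (x : E2) : ∃ y ∈ closedBall (0 : E2) (4 * π), ∀ s,
    ‖iteratedFDeriv ℝ k (fun y => F (y, s)) x‖ = ‖iteratedFDeriv ℝ k (fun y => F (y, s)) y‖ := by
  obtain ⟨y, hy, h⟩ := th_box x
  refine ⟨y, hy, fun s => h (fun x => ‖iteratedFDeriv ℝ k (fun y => F (y, s)) x‖) ?_⟩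
  intro x i
  have := iteratedFDeriv_comp_add_right (𝕜 := ℝ) (f := fun y => F (y, s)) k
    ((2 * π) • EuclideanSpace.single i 1) x
  simp only [← this]
  congr 3
  ext y
  exact hP y s i

lemma th_S_eq {V : Type*} [NormedAddCommGroup V] [NormedSpace ℝ V] (k : ℕ) (F : E2 × ℝ → V)
    (hP : thPer F) (s : ℝ) : thS k F s =
    sSup ((fun x => ‖iteratedFDeriv ℝ k (fun y => F (y, s)) x‖) '' closedBall (0 : E2) (4 * π)) := by
  rw [thS, iSup]
  congr 1
  ext r
  constructor
  · rintro ⟨x, rfl⟩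
    obtain ⟨y, hy, h⟩ := th_slice_box k F hP x
    exact ⟨y, hy, (h s).symm⟩
  · rintro ⟨x, -, rfl⟩
    exact ⟨x, rfl⟩

lemma th_S_cont {V : Type*} [NormedAddCommGroup V] [NormedSpace ℝ V] (k : ℕ) (F : E2 × ℝ → V)
    (hF : ContDiff ℝ (⊤ : ℕ∞) F) (hP : thPer F) : Continuous (thS k F) := by
  have : thS k F = fun s => sSup ((fun s x => ‖iteratedFDeriv ℝ k (fun y => F (y, s)) x‖) s ''
      closedBall (0 : E2) (4 * π)) := by
    ext s; rw [th_S_eq k F hP]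
  rw [this]
  exact (isCompact_closedBall _ _).continuous_sSup (th_slice_cont k F hF)

lemma th_slice_le {V : Type*} [NormedAddCommGroup V] [NormedSpace ℝ V] (k : ℕ) (F : E2 × ℝ → V)
    (hF : ContDiff ℝ (⊤ : ℕ∞) F) (hP : thPer F) (a b : ℝ) :
    ∃ M, 0 ≤ M ∧ ∀ s ∈ Icc a b, ∀ x, ‖iteratedFDeriv ℝ k (fun y => F (y, s)) x‖ ≤ M := by
  obtain ⟨M, hM⟩ := ((isCompact_Icc (a := a) (b := b)).prod
    (isCompact_closedBall (0 : E2) (4 * π))).exists_bound_of_continuousOn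
    (th_slice_cont k F hF).continuousOn
  refine ⟨max M 0, le_max_right _ _, fun s hs x => le_max_of_le_left ?_⟩
  obtain ⟨y, hy, h⟩ := th_slice_box k F hP x
  rw [h s]
  simpa using hM (s, y) ⟨hs, hy⟩

lemma th_le_S {V : Type*} [NormedAddCommGroup V] [NormedSpace ℝ V] (k : ℕ) (F : E2 × ℝ → V)
    (hF : ContDiff ℝ (⊤ : ℕ∞) F) (hP : thPer F) (s : ℝ) (x : E2) :
    ‖iteratedFDeriv ℝ k (fun y => F (y, s)) x‖ ≤ thS k F s := by
  obtain ⟨M, -, hM⟩ := th_slice_le k F hF hP s s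
  exact le_ciSup (f := fun x => ‖iteratedFDeriv ℝ k (fun y => F (y, s)) x‖)
    ⟨M, by rintro _ ⟨x, rfl⟩; exact hM s (by simp) x⟩ x

lemma th_S_nonneg {V : Type*} [NormedAddCommGroup V] [NormedSpace ℝ V] (k : ℕ) (F : E2 × ℝ → V)
    (s : ℝ) : 0 ≤ thS k F s := Real.iSup_nonneg fun _ => norm_nonneg _

lemma th_S_le_sup (k : ℕ) (u : E2 × ℝ → E2)
    (hF : ContDiff ℝ (⊤ : ℕ∞) u) (hP : thPer u) (t₀ T s : ℝ) (hs : s ∈ Icc t₀ T) :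
    thS k u s ≤ supDNu k u t₀ T := by
  obtain ⟨M, hM0, hM⟩ := th_slice_le k u hF hP t₀ T
  refine ciSup_le fun x => ?_
  refine le_trans ?_ (le_ciSup (f := fun x : E2 => ⨆ (s : Set.Icc t₀ T),
    ‖iteratedFDeriv ℝ k (fun y => u (y, (s : ℝ))) x‖) ⟨M, ?_⟩ x)
  · exact le_ciSup (f := fun (s : Set.Icc t₀ T) => ‖iteratedFDeriv ℝ k (fun y => u (y, (s : ℝ))) x‖)
      ⟨M, by rintro _ ⟨s, rfl⟩; exact hM s s.2 x⟩ ⟨s, hs⟩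
  · rintro _ ⟨x, rfl⟩
    exact Real.iSup_le (fun s => hM s s.2 x) hM0

lemma th_sup_one (u : E2 × ℝ → E2) (t₀ T : ℝ) : supDNu 1 u t₀ T = supDu u t₀ T := by
  simp only [supDNu, supDu, norm_iteratedFDeriv_one]

lemma th_S_landau {V : Type*} [NormedAddCommGroup V] [NormedSpace ℝ V] (k : ℕ) (F : E2 × ℝ → V)
    (hF : ContDiff ℝ (⊤ : ℕ∞) F) (hP : thPer F) (s : ℝ) :
    thS (k + 1) F s ^ 2 ≤ 8 * (thS k F s * thS (k + 2) F s) := by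
  have hs : ContDiff ℝ (⊤ : ℕ∞) (fun y => F (y, s)) := hF.comp (contDiff_id.prodMk contDiff_const)
  have hd : ∀ n : ℕ, Differentiable ℝ (iteratedFDeriv ℝ n (fun y => F (y, s))) := fun n =>
      hs.differentiable_iteratedFDeriv (by exact_mod_cast WithTop.coe_lt_top n)
  have h0 := mul_nonneg (th_S_nonneg k F s) (th_S_nonneg (k + 2) F s)
  have key : thS (k + 1) F s ≤ √(8 * (thS k F s * thS (k + 2) F s)) := by
    refine ciSup_le fun x => ?_
    apply Real.le_sqrt_of_sq_le
    rw [← norm_fderiv_iteratedFDeriv]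
    refine th_landau _ (hd k) _ _ (th_le_S k F hF hP s) (th_S_nonneg _ _ _) ?_ x
    intro x y
    rw [fderiv_iteratedFDeriv, Function.comp, Function.comp, ← dist_eq_norm,
      LinearIsometryEquiv.dist_map, dist_eq_norm]
    refine convex_univ.norm_image_sub_le_of_norm_fderiv_le (𝕜 := ℝ) (fun z _ => hd (k + 1) z)
      (fun z _ => ?_) (mem_univ y) (mem_univ x)
    rw [norm_fderiv_iteratedFDeriv]
    exact th_le_S (k + 2) F hF hP s z
  calc _ ≤ √(8 * (thS k F s * thS (k + 2) F s)) ^ 2 := by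
        gcongr
        exact th_S_nonneg _ _ _
    _ = _ := Real.sq_sqrt (by positivity)

lemma th_curve (u : E2 × ℝ → E2) (hu : ContDiff ℝ (⊤ : ℕ∞) u) (hP : thPer u) (t₀ t : ℝ)
    (ht : t₀ ≤ t) (x : E2) : ∃ X : ℝ → E2, X t = x ∧
      ∀ s ∈ Icc t₀ t, HasDerivWithinAt X (u (X s, s)) (Icc t₀ t) s := by
  obtain ⟨M, hM0, hM⟩ := th_slice_le 0 u hu hP t₀ t
  obtain ⟨K, hK0, hK⟩ := th_slice_le 1 u hu hP t₀ t
  simp only [norm_iteratedFDeriv_zero] at hM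
  simp only [norm_iteratedFDeriv_one] at hK
  have hPL : IsPicardLindelof (fun s x => u (x, s)) (⟨t, ht, le_rfl⟩ : Icc t₀ t) x
      ⟨M * (t - t₀), mul_nonneg hM0 (by linarith)⟩ 0 ⟨M, hM0⟩ ⟨K, hK0⟩ := by
    refine ⟨?_, ?_, ?_, ?_⟩
    · intro s hs
      refine (lipschitzWith_of_nnnorm_fderiv_le (𝕜 := ℝ) (f := fun x => u (x, s)) ?_ ?_).lipschitzOnWith
      · exact (hu.comp (contDiff_id.prodMk contDiff_const)).differentiable (by simp)
      · intro y
        exact hK s hs y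
    · intro y _
      exact (hu.continuous.comp (continuous_const.prodMk continuous_id)).continuousOn
    · intro s hs y _
      exact hM s hs y
    · simp [ht]
      exact le_rfl
  obtain ⟨X, h1, h2⟩ := hPL.exists_eq_forall_mem_Icc_hasDerivWithinAt₀
  exact ⟨X, h1, h2⟩

lemma th_commutator (N : ℕ) (φ : E2 → ℝ) (w : E2 → E2) (hφ : ContDiff ℝ (⊤ : ℕ∞) φ)
    (hw : ContDiff ℝ (⊤ : ℕ∞) w) (x : E2) :
    ‖iteratedFDeriv ℝ N (fun y => fderiv ℝ φ y (w y - w x)) x‖ ≤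
      ∑ i ∈ Finset.range N, (N.choose i : ℝ) * ‖iteratedFDeriv ℝ (i + 1) φ x‖ *
        ‖iteratedFDeriv ℝ (N - i) w x‖ := by
  have h1 : ContDiff ℝ (⊤ : ℕ∞) (fderiv ℝ φ) := hφ.fderiv_right (m := (⊤ : ℕ∞)) (by simp)
  have h2 : ContDiff ℝ (⊤ : ℕ∞) (fun y => w y - w x) := hw.sub contDiff_const
  have := (ContinuousLinearMap.id ℝ (E2 →L[ℝ] ℝ)).norm_iteratedFDeriv_le_of_bilinear_of_le_one
    h1 h2 x (n := N) (WithTop.coe_le_coe.2 (le_top (a := (N : ℕ∞)))) ContinuousLinearMap.norm_id_le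
  refine this.trans ?_
  rw [Finset.sum_range_succ]
  have e0 : ∀ k : ℕ, k = 0 → ‖iteratedFDeriv ℝ k (fun y => w y - w x) x‖ = 0 := by
    rintro _ rfl
    simp
  rw [e0 (N - N) (Nat.sub_self N), mul_zero, add_zero]
  refine Finset.sum_le_sum fun i hi => ?_
  rw [norm_iteratedFDeriv_fderiv]
  have hi' : N - i ≠ 0 := by simp at hi; omega
  have e : iteratedFDeriv ℝ (N - i) (fun y => w y - w x) x = iteratedFDeriv ℝ (N - i) w x := by
    have h3 := fun n : ℕ => (WithTop.coe_le_coe.2 (le_top (a := (n : ℕ∞))))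
    have := iteratedFDeriv_sub_apply (x := x) (i := N - i) (𝕜 := ℝ) (f := w) (g := fun _ => w x)
      (hw.of_le (h3 _)).contDiffAt contDiff_const.contDiffAt
    rw [iteratedFDeriv_const_of_ne hi'] at this
    simp only [Pi.zero_apply, sub_zero] at this
    exact this
  rw [e]

lemma th_evol (N : ℕ) (t₀ T : ℝ) (u : E2 × ℝ → E2) (f g : E2 × ℝ → ℝ)
    (hu : ContDiff ℝ (⊤ : ℕ∞) u) (hPu : thPer u) (hf : ContDiff ℝ (⊤ : ℕ∞) f) (hPf : thPer f)
    (hg : ContDiff ℝ (⊤ : ℕ∞) g) (hPg : thPer g)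
    (heq : ∀ (x : E2), ∀ t ∈ Set.Icc t₀ T,
      deriv (fun s => f (x, s)) t + fderiv ℝ (fun y => f (y, t)) x (u (x, t)) = g (x, t))
    (R : ℝ → ℝ) (hR : Continuous R)
    (hRb : ∀ s ∈ Icc t₀ T, thS N g s + ∑ i ∈ Finset.range N, (N.choose i : ℝ) *
      (thS (i + 1) f s * thS (N - i) u s) ≤ R s) (t : ℝ) (ht : t ∈ Icc t₀ T) :
    thS N f t ≤ thS N f t₀ + ∫ s in t₀..t, R s := by
  refine ciSup_le fun x => ?_
  obtain ⟨X, hX, hXd⟩ := th_curve u hu hPu t₀ t ht.1 x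
  set L := ContinuousMultilinearMap.compContinuousLinearMapL (𝕜 := ℝ) (F := ℝ)
    (fun _ : Fin N => ContinuousLinearMap.inl ℝ E2 ℝ) with hL
  let H : ℝ → (ContinuousMultilinearMap ℝ (fun _ : Fin N => E2) ℝ) :=
    fun s => iteratedFDeriv ℝ N (fun y => f (y, s)) (X s)
  have hHeq : H = fun s => L (iteratedFDeriv ℝ N f (X s, s)) := by
    ext1 s
    exact th_slice N f hf (X s) s
  have hdf : Differentiable ℝ f := hf.differentiable (by simp)
  have hdN : Differentiable ℝ (iteratedFDeriv ℝ N f) :=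
    hf.differentiable_iteratedFDeriv (by exact_mod_cast WithTop.coe_lt_top N)
  let H' : ℝ → (ContinuousMultilinearMap ℝ (fun _ : Fin N => E2) ℝ) :=
    fun s => iteratedFDeriv ℝ N (fun y => fderiv ℝ f (y, s) (u (X s, s), 1)) (X s)
  have hder : ∀ s ∈ Icc t₀ t, HasDerivWithinAt H (H' s) (Icc t₀ t) s := by
    intro s hs
    have h1 : HasDerivWithinAt (fun s => (X s, s)) (u (X s, s), (1 : ℝ)) (Icc t₀ t) s :=
      (hXd s hs).prodMk (hasDerivWithinAt_id _ _)
    have h2 : HasFDerivAt (fun z => L (iteratedFDeriv ℝ N f z)) _ (X s, s) :=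
      L.hasFDerivAt.comp (X s, s) (hdN (X s, s)).hasFDerivAt
    have h3 := HasFDerivAt.comp_hasDerivWithinAt (f := fun s => (X s, s)) s h2 h1
    rw [hHeq]
    convert! h3 using 1
    have h4 : ContDiff ℝ (⊤ : ℕ∞) (fun z => fderiv ℝ f z (u (X s, s), 1)) :=
      (hf.fderiv_right (m := (⊤ : ℕ∞)) (by simp)).clm_apply contDiff_const
    ext v
    simp only [H']
    rw [th_slice N _ h4]
    simp only [ContinuousMultilinearMap.compContinuousLinearMap_apply]
    rw [← th_fderiv_iteratedFDeriv _ N f hf]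
    rfl
  have hbound : ∀ s ∈ Icc t₀ t, ‖H' s‖ ≤ R s := by
    intro s hs
    have hs' : s ∈ Icc t₀ T := ⟨hs.1, hs.2.trans ht.2⟩
    have hfs : ContDiff ℝ (⊤ : ℕ∞) (fun y => f (y, s)) := hf.comp (contDiff_id.prodMk contDiff_const)
    have hgs : ContDiff ℝ (⊤ : ℕ∞) (fun y => g (y, s)) := hg.comp (contDiff_id.prodMk contDiff_const)
    have hus : ContDiff ℝ (⊤ : ℕ∞) (fun y => u (y, s)) := hu.comp (contDiff_id.prodMk contDiff_const)
    have hcs : ContDiff ℝ (⊤ : ℕ∞)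
        (fun y => fderiv ℝ (fun y => f (y, s)) y (u (y, s) - u (X s, s))) :=
      (hfs.fderiv_right (m := (⊤ : ℕ∞)) (by simp)).clm_apply (hus.sub contDiff_const)
    have e : (fun y => fderiv ℝ f (y, s) (u (X s, s), 1)) =
        fun y => g (y, s) - fderiv ℝ (fun y => f (y, s)) y (u (y, s) - u (X s, s)) := by
      ext y
      rw [← heq y s hs']
      have a1 : HasFDerivAt (fun y => f (y, s)) _ y :=
        (hdf (y, s)).hasFDerivAt.comp y (hasFDerivAt_prodMk_left y s)
      have a2 : HasDerivAt (fun s => f (y, s)) _ s :=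
        (hdf (y, s)).hasFDerivAt.comp_hasDerivAt s ((hasDerivAt_const s y).prodMk (hasDerivAt_id s))
      rw [a1.fderiv, a2.deriv]
      have a3 : ((u (X s, s), 1) : E2 × ℝ) = (0, 1) + (u (X s, s), 0) := by simp
      rw [a3, map_add]
      simp only [map_sub]
      simp
      ring
    have h3 := (WithTop.coe_le_coe.2 (le_top (a := (N : ℕ∞))))
    have e2 : H' s = iteratedFDeriv ℝ N (fun y => g (y, s)) (X s) - iteratedFDeriv ℝ N
        (fun y => fderiv ℝ (fun y => f (y, s)) y (u (y, s) - u (X s, s))) (X s) := by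
      simp only [H']
      rw [e]
      exact iteratedFDeriv_sub_apply (hgs.of_le h3).contDiffAt (hcs.of_le h3).contDiffAt
    rw [e2]
    refine (norm_sub_le _ _).trans (le_trans ?_ (hRb s hs'))
    gcongr
    · exact th_le_S N g hg hPg s _
    · refine (th_commutator N _ _ hfs hus (X s)).trans ?_
      refine Finset.sum_le_sum fun i hi => ?_
      rw [mul_assoc]
      gcongr
      · exact th_S_nonneg _ _ _
      · exact th_le_S _ f hf hPf s _
      · exact th_le_S _ u hu hPu s _
  have := image_norm_le_of_norm_deriv_right_le_deriv_boundary (f := H) (f' := H') (a := t₀) (b := t)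
    (B := fun t => thS N f t₀ + ∫ s in t₀..t, R s) (B' := R)
    (fun s hs => (hder s hs).continuousWithinAt)
    (fun s hs => (hder s (Ico_subset_Icc_self hs)).mono_of_mem_nhdsWithin (Icc_mem_nhdsGE_of_mem hs))
    (by simpa using th_le_S N f hf hPf t₀ (X t₀))
    (fun s => (hR.integral_hasStrictDerivAt t₀ s).hasDerivAt.const_add _)
    (fun s hs => hbound s (Ico_subset_Icc_self hs)) (x := t) ⟨ht.1, le_rfl⟩
  simpa [H, hX] using this

lemma th_gronwall (φ G : ℝ → ℝ) (hφ : Continuous φ) (hG : Continuous G) (l φ0 t₀ T : ℝ)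
    (hl : 0 ≤ l) (h : ∀ t ∈ Icc t₀ T, φ t ≤ φ0 + ∫ s in t₀..t, (G s + l * φ s)) (t : ℝ)
    (ht : t ∈ Icc t₀ T) : Real.exp (-(l * (t - t₀))) * φ t
      ≤ φ0 + ∫ s in t₀..t, Real.exp (-(l * (s - t₀))) * G s := by
  let Ψ : ℝ → ℝ := fun t => φ0 + ∫ s in t₀..t, (G s + l * φ s)
  let Q : ℝ → ℝ := fun t => φ0 + (∫ s in t₀..t, Real.exp (-(l * (s - t₀))) * G s)
    - Real.exp (-(l * (t - t₀))) * Ψ t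
  have hΨ : ∀ t, HasDerivAt Ψ (G t + l * φ t) t := fun t =>
    (Continuous.integral_hasStrictDerivAt (by fun_prop) t₀ t).hasDerivAt.const_add _
  have hI : ∀ t, HasDerivAt (fun t => ∫ s in t₀..t, Real.exp (-(l * (s - t₀))) * G s)
      (Real.exp (-(l * (t - t₀))) * G t) t := fun t =>
    (Continuous.integral_hasStrictDerivAt (f := fun s => Real.exp (-(l * (s - t₀))) * G s)
      (by fun_prop) t₀ t).hasDerivAt
  have hE : ∀ t, HasDerivAt (fun t => Real.exp (-(l * (t - t₀))))
      (Real.exp (-(l * (t - t₀))) * (-(l * 1))) t := fun t =>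
    ((((hasDerivAt_id t).sub_const t₀).const_mul l).neg).exp
  have hQ : ∀ t, HasDerivAt Q (Real.exp (-(l * (t - t₀))) * (l * (Ψ t - φ t))) t := by
    intro t
    have := ((hI t).const_add φ0).sub ((hE t).mul (hΨ t))
    convert! this using 1
    ring
  have hmono : MonotoneOn Q (Icc t₀ T) := by
    refine monotoneOn_of_deriv_nonneg (convex_Icc _ _)
      (fun t _ => (hQ t).continuousAt.continuousWithinAt)
      (fun t _ => (hQ t).differentiableAt.differentiableWithinAt) ?_
    intro t ht
    rw [(hQ t).deriv]
    have := h t (interior_subset ht)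
    have : 0 ≤ Ψ t - φ t := sub_nonneg.2 this
    positivity
  have h1 := hmono (left_mem_Icc.2 (ht.1.trans ht.2)) ht ht.1
  have h2 : Q t₀ = 0 := by simp [Q, Ψ]
  rw [h2] at h1
  have h3 : Real.exp (-(l * (t - t₀))) * φ t ≤ Real.exp (-(l * (t - t₀))) * Ψ t := by
    gcongr
    exact h t ht
  simp only [Q] at h1
  linarith

lemma th_double (γ : ℝ → ℝ) (hγ : Continuous γ) (t₀ t : ℝ) :
    ∫ s in t₀..t, (∫ τ in t₀..s, γ τ) = ∫ τ in t₀..t, (t - τ) * γ τ := by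
  have h1 : ∀ s, HasDerivAt (fun s => ∫ τ in t₀..s, γ τ) (γ s) s := fun s =>
    (hγ.integral_hasStrictDerivAt t₀ s).hasDerivAt
  have h2 : ∀ s, HasDerivAt (fun s => ∫ τ in t₀..s, τ * γ τ) (s * γ s) s := fun s =>
    (Continuous.integral_hasStrictDerivAt (f := fun τ => τ * γ τ) (by fun_prop) t₀ s).hasDerivAt
  have h3 : ∀ s, HasDerivAt (fun s => s * (∫ τ in t₀..s, γ τ) - ∫ τ in t₀..s, τ * γ τ)
      (∫ τ in t₀..s, γ τ) s := by
    intro s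
    convert! ((hasDerivAt_id s).mul (h1 s)).sub (h2 s) using 1
    simp
  have hc : Continuous (fun s => ∫ τ in t₀..s, γ τ) :=
    continuous_iff_continuousAt.2 fun s => (h1 s).continuousAt
  rw [intervalIntegral.integral_eq_sub_of_hasDerivAt (fun s _ => h3 s) (hc.intervalIntegrable _ _)]
  simp only [intervalIntegral.integral_same, mul_zero, sub_zero, sub_mul]
  rw [intervalIntegral.integral_sub (by apply Continuous.intervalIntegrable; fun_prop)
    (by apply Continuous.intervalIntegrable; fun_prop), intervalIntegral.integral_const_mul]

lemma th_final (K l U t₀ T a0 m0 : ℝ) (a m G1 GN : ℝ → ℝ) (ha : Continuous a) (hm : Continuous m)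
    (hG1 : Continuous G1) (hGN : Continuous GN) (hl : 0 ≤ l) (hKU : 0 ≤ K * U)
    (h1 : ∀ t ∈ Icc t₀ T, a t ≤ a0 + ∫ s in t₀..t, (G1 s + l * a s))
    (h2 : ∀ t ∈ Icc t₀ T, m t ≤ m0 + ∫ s in t₀..t, ((GN s + K * U * a s) + l * m s))
    (t : ℝ) (ht : t ∈ Icc t₀ T) :
    m t ≤ (m0 + K * (t - t₀) * U * a0) * Real.exp (l * (t - t₀))
      + ∫ τ in t₀..t, Real.exp (l * (t - τ)) * (GN τ + K * (t - τ) * U * G1 τ) := by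
  have b1 := th_gronwall a G1 ha hG1 l a0 t₀ T hl h1
  have b2 := th_gronwall m (fun s => GN s + K * U * a s) hm (by fun_prop) l m0 t₀ T hl h2 t ht
  let e : ℝ → ℝ := fun s => Real.exp (-(l * (s - t₀)))
  have he : Continuous e := by fun_prop
  have hI1 : Continuous (fun s => ∫ τ in t₀..s, e τ * G1 τ) :=
    continuous_iff_continuousAt.2 fun s =>
      (Continuous.integral_hasStrictDerivAt (f := fun τ => e τ * G1 τ)
        (by fun_prop) t₀ s).hasDerivAt.continuousAt
  have b3 : ∫ s in t₀..t, e s * (GN s + K * U * a s) ≤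
      ∫ s in t₀..t, (e s * GN s + K * U * (a0 + ∫ τ in t₀..s, e τ * G1 τ)) := by
    refine intervalIntegral.integral_mono_on ht.1
      (by apply Continuous.intervalIntegrable; fun_prop)
      (by apply Continuous.intervalIntegrable; fun_prop) ?_
    intro s hs
    have := mul_le_mul_of_nonneg_left (b1 s ⟨hs.1, hs.2.trans ht.2⟩) hKU
    simp only [e]
    linarith
  have b4 : ∫ s in t₀..t, (e s * GN s + K * U * (a0 + ∫ τ in t₀..s, e τ * G1 τ))
      = K * U * (t - t₀) * a0 +
        ∫ s in t₀..t, e s * (GN s + K * (t - s) * U * G1 s) := by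
    rw [intervalIntegral.integral_add (by apply Continuous.intervalIntegrable; fun_prop)
      (by apply Continuous.intervalIntegrable; fun_prop), intervalIntegral.integral_const_mul,
      intervalIntegral.integral_add (by apply Continuous.intervalIntegrable; fun_prop)
      (by apply Continuous.intervalIntegrable; fun_prop), th_double _ (by fun_prop)]
    have : ∀ s, e s * (GN s + K * (t - s) * U * G1 s)
      = e s * GN s + K * U * ((t - s) * (e s * G1 s)) := fun s => by ring
    simp only [this]
    rw [intervalIntegral.integral_add (by apply Continuous.intervalIntegrable; fun_prop)
      (by apply Continuous.intervalIntegrable; fun_prop), intervalIntegral.integral_const_mul]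
    simp
    ring
  have b5 : e t * m t ≤ m0 + (K * U * (t - t₀) * a0 +
        ∫ s in t₀..t, e s * (GN s + K * (t - s) * U * G1 s)) := by
    rw [← b4]
    exact b2.trans (by gcongr)
  have hE : Real.exp (l * (t - t₀)) * e t = 1 := by
    simp only [e]
    rw [← Real.exp_add]; simp
  have b6 : ∫ τ in t₀..t, Real.exp (l * (t - τ)) * (GN τ + K * (t - τ) * U * G1 τ)
      = Real.exp (l * (t - t₀)) * ∫ s in t₀..t, e s * (GN s + K * (t - s) * U * G1 s) := by
    rw [← intervalIntegral.integral_const_mul]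
    congr 1
    ext s
    rw [← mul_assoc, ← Real.exp_add]
    congr 2
    ring
  rw [b6]
  calc m t = Real.exp (l * (t - t₀)) * (e t * m t) := by rw [← mul_assoc, hE, one_mul]
    _ ≤ _ := mul_le_mul_of_nonneg_left b5 (Real.exp_pos _).le
    _ = _ := by ring

end helpers

/-- Higher-derivative transport estimate for `∂ₜ f + u·∇f = g` (with a constant `C = C(N)`):
`‖D^N f(·,t)‖ ≤ (‖D^N f₀‖ + C (t−t₀) ‖D^N u‖ ‖Df₀‖) e^{C(t−t₀)‖Du‖}
  + ∫_{t₀}^t e^{C(t−τ)‖Du‖} ( ‖D^N g(·,τ)‖ + C (t−τ) ‖D^N u‖ ‖Dg(·,τ)‖ ) dτ`. -/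
theorem transport_higher_derivative_estimate :
    ∀ N : ℕ, 2 ≤ N → ∃ C : ℝ,
    ∀ (t₀ T : ℝ), t₀ < T →
    ∀ (u : E2 × ℝ → E2) (f g : E2 × ℝ → ℝ) (f₀ : E2 → ℝ),
    ContDiff ℝ (⊤ : ℕ∞) u →
    (∀ (x : E2) (t : ℝ) (i : Fin 2),
      u (x + (2 * π) • EuclideanSpace.single i 1, t) = u (x, t)) →
    ContDiff ℝ (⊤ : ℕ∞) f →
    (∀ (x : E2) (t : ℝ) (i : Fin 2),
      f (x + (2 * π) • EuclideanSpace.single i 1, t) = f (x, t)) →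
    ContDiff ℝ (⊤ : ℕ∞) g →
    (∀ (x : E2) (t : ℝ) (i : Fin 2),
      g (x + (2 * π) • EuclideanSpace.single i 1, t) = g (x, t)) →
    (∀ x, f (x, t₀) = f₀ x) →
    (∀ (x : E2), ∀ t ∈ Set.Icc t₀ T,
      deriv (fun s => f (x, s)) t + fderiv ℝ (fun y => f (y, t)) x (u (x, t)) = g (x, t)) →
    ∀ t ∈ Set.Icc t₀ T,
      (⨆ x : E2, ‖iteratedFDeriv ℝ N (fun y => f (y, t)) x‖)
        ≤ ((⨆ x : E2, ‖iteratedFDeriv ℝ N f₀ x‖)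
              + C * (t - t₀) * supDNu N u t₀ T * (⨆ x : E2, ‖fderiv ℝ f₀ x‖))
            * Real.exp (C * (t - t₀) * supDu u t₀ T)
          + ∫ τ in t₀..t,
              Real.exp (C * (t - τ) * supDu u t₀ T) *
                ((⨆ x : E2, ‖iteratedFDeriv ℝ N (fun y => g (y, τ)) x‖)
                  + C * (t - τ) * supDNu N u t₀ T *
                      (⨆ x : E2, ‖fderiv ℝ (fun y => g (y, τ)) x‖)) := by

  intro N hN
  obtain ⟨K, hK⟩ : ∃ K : ℝ, K = 2 ^ N * 8 ^ (N ^ 2) := ⟨_, rfl⟩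
  have hK1 : 1 ≤ K := by
    rw [hK]
    have h1 : (1 : ℝ) ≤ 2 ^ N := one_le_pow₀ (by norm_num)
    have h2 : (1 : ℝ) ≤ 8 ^ (N ^ 2) := one_le_pow₀ (by norm_num)
    nlinarith
  refine ⟨K, ?_⟩
  intro t₀ T hT u f g f₀ hu hPu hf hPf hg hPg hf0 heq t ht
  have hf0' : f₀ = fun x => f (x, t₀) := by ext x; rw [hf0]
  subst hf0'
  have ht0 : t₀ ∈ Set.Icc t₀ T := ⟨le_rfl, hT.le⟩
  have hU0 : 0 ≤ supDu u t₀ T := by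
    rw [← th_sup_one]
    exact (th_S_nonneg 1 u t₀).trans (th_S_le_sup 1 u hu hPu t₀ T t₀ ht0)
  have hUN0 : 0 ≤ supDNu N u t₀ T :=
    (th_S_nonneg N u t₀).trans (th_S_le_sup N u hu hPu t₀ T t₀ ht0)
  have hS1 : ∀ s ∈ Set.Icc t₀ T, thS 1 u s ≤ supDu u t₀ T := fun s hs => by
    rw [← th_sup_one]
    exact th_S_le_sup 1 u hu hPu t₀ T s hs
  have hSN : ∀ s ∈ Set.Icc t₀ T, thS N u s ≤ supDNu N u t₀ T := fun s hs =>
    th_S_le_sup N u hu hPu t₀ T s hs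
  have cf := fun k => th_S_cont k f hf hPf
  have cg := fun k => th_S_cont k g hg hPg
  have cf1 := cf 1
  have cfN := cf N
  have cg1 := cg 1
  have cgN := cg N
  have hl : 0 ≤ K * supDu u t₀ T := by positivity
  have key := th_final K (K * supDu u t₀ T) (supDNu N u t₀ T) t₀ T (thS 1 f t₀) (thS N f t₀)
    (thS 1 f) (thS N f) (thS 1 g) (thS N g) (cf 1) (cf N) (cg 1) (cg N) hl (by positivity)
    ?_ ?_ t ht
  · simp only [thS, norm_iteratedFDeriv_one] at key
    have e1 : ∀ s, K * s * supDu u t₀ T = K * supDu u t₀ T * s := fun s => by ring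
    simp only [e1]
    exact key
  · refine th_evol 1 t₀ T u f g hu hPu hf hPf hg hPg heq
      (fun s => thS 1 g s + K * supDu u t₀ T * thS 1 f s)
      (cg1.add (continuous_const.mul cf1)) ?_
    intro s hs
    simp only [Finset.sum_range_one, Nat.choose_zero_right, Nat.cast_one, one_mul, zero_add,
      Nat.sub_zero]
    have a0 := th_S_nonneg 1 f s
    have : thS 1 f s * thS 1 u s ≤ K * supDu u t₀ T * thS 1 f s := by
      calc _ ≤ thS 1 f s * supDu u t₀ T := by gcongr; exact hS1 s hs
        _ = 1 * supDu u t₀ T * thS 1 f s := by ring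
        _ ≤ _ := by gcongr
    linarith
  · refine th_evol N t₀ T u f g hu hPu hf hPf hg hPg heq
      (fun s => (thS N g s + K * supDNu N u t₀ T * thS 1 f s) + K * supDu u t₀ T * thS N f s)
      ((cgN.add (continuous_const.mul cf1)).add (continuous_const.mul cfN)) ?_
    intro s hs
    rw [add_assoc]
    gcongr
    have a0 := th_S_nonneg 1 f s
    have aN := th_S_nonneg N f s
    have hterm : ∀ i ∈ Finset.range N, (N.choose i : ℝ) * (thS (i + 1) f s * thS (N - i) u s)
        ≤ (N.choose i : ℝ) * (8 ^ (N ^ 2) *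
          (thS 1 f s * supDNu N u t₀ T + thS N f s * supDu u t₀ T)) := by
      intro i hi
      simp only [Finset.mem_range] at hi
      refine mul_le_mul_of_nonneg_left ?_ (Nat.cast_nonneg _)
      have := th_interp N (by omega) (fun k => thS k f s) (fun k => thS k u s)
        (fun k => th_S_nonneg _ _ _) (fun k => th_S_nonneg _ _ _)
        (fun k => th_S_landau k f hf hPf s) (fun k => th_S_landau k u hu hPu s)
        (i + 1) (by omega) (by omega)
      simp only [Nat.add_sub_add_right] at this
      refine this.trans ?_
      gcongr
      · exact hSN s hs
      · exact hS1 s hs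
    refine (Finset.sum_le_sum hterm).trans ?_
    rw [← Finset.sum_mul]
    have hsum : ∑ i ∈ Finset.range N, (N.choose i : ℝ) ≤ 2 ^ N := by
      have h1 := Nat.sum_range_choose N
      rw [Finset.sum_range_succ] at h1
      have h2 : ∑ i ∈ Finset.range N, N.choose i ≤ 2 ^ N := by omega
      exact_mod_cast h2
    calc _ ≤ (2 : ℝ) ^ N * (8 ^ (N ^ 2) *
          (thS 1 f s * supDNu N u t₀ T + thS N f s * supDu u t₀ T)) := by gcongr
      _ = _ := by rw [hK]; ring
end
end

section
/- For every integer N ≥ 2 there exists a constant C = C(N) with the following property. Let t₀ < T be reals, let u : ℝ² × [t₀,T] → ℝ² be a smooth vector field, 2π-periodic in each space variable, and let Φ : ℝ² × [t₀,T] → ℝ² be a smooth solution of ∂_t Φ + u·∇Φ = 0 with Φ(x,t₀) = x, such that Φ(x,t) − x is 2π-periodic in x. Then for every t ∈ [t₀,T]: ‖D^N Φ(·,t)‖_{C⁰} ≤ C (t−t₀) ‖D^N u‖_{C⁰} e^{C (t−t₀) ‖Du‖_{C⁰}}, where ‖D^j u‖_{C⁰} denotes the supremum over ℝ² × [t₀,T]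 of the norm of the j-th spatial derivative of u. -/
noncomputable section

open Real MeasureTheory
open scoped BigOperators

/-- Landau inequality, base case. -/
theorem landau_base {E F : Type} [NormedAddCommGroup E] [NormedSpace ℝ E]
    [NormedAddCommGroup F] [NormedSpace ℝ F] (f : E → F) (hf : ContDiff ℝ (⊤ : ℕ∞) f)
    (A B : ℝ) (hA : ∀ x, ‖f x‖ ≤ A) (hB : ∀ x, ‖fderiv ℝ (fderiv ℝ f) x‖ ≤ B) (x : E) :
    ‖fderiv ℝ f x‖ ^ 2 ≤ 8 * A * B := by
  have hA0 : 0 ≤ A := (norm_nonneg _).trans (hA x)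
  have hB0 : 0 ≤ B := le_trans (norm_nonneg (fderiv ℝ (fderiv ℝ f) x)) (hB x)
  have hd : Differentiable ℝ f := hf.differentiable (by simp)
  have hf' : ContDiff ℝ (⊤ : ℕ∞) (fderiv ℝ f) := hf.fderiv_right (by simp)
  have hd' : Differentiable ℝ (fderiv ℝ f) := hf'.differentiable (by simp)
  have key : ∀ h : ℝ, 0 < h → h * ‖fderiv ℝ f x‖ ≤ 2 * A + h ^ 2 * B := by
    intro h hh
    have hle : ‖fderiv ℝ f x‖ ≤ (2 * A + h ^ 2 * B) / h := by
      refine ContinuousLinearMap.opNorm_le_of_unit_norm (by positivity) ?_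
      intro v hv
      have h1 : ‖f (x + h • v) - f x - fderiv ℝ f x ((x + h • v) - x)‖
          ≤ (B * h) * ‖(x + h • v) - x‖ := by
        refine Convex.norm_image_sub_le_of_norm_fderiv_le' (s := Metric.closedBall x h) (𝕜 := ℝ)
          (fun y _ => hd y) ?_ (convex_closedBall _ _) ?_ ?_
        · intro y hy
          have := Convex.norm_image_sub_le_of_norm_fderiv_le (𝕜 := ℝ) (s := Set.univ)
            (fun y _ => hd' y) (fun y _ => hB y) convex_univ (Set.mem_univ x) (Set.mem_univ y)
          refine this.trans ?_
          gcongr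
          simpa [dist_eq_norm] using hy
        · simp [hh.le]
        · simp [norm_smul, hv, abs_of_pos hh]
      have h2 : x + h • v - x = h • v := by abel
      rw [h2, norm_smul, hv, Real.norm_eq_abs, abs_of_pos hh] at h1
      have h3 : ‖fderiv ℝ f x (h • v)‖ ≤ 2 * A + h ^ 2 * B := by
        calc ‖fderiv ℝ f x (h • v)‖ = ‖f (x + h • v) - f x - (f (x + h • v) - f x - fderiv ℝ f x (h • v))‖ := by
              congr 1; abel
          _ ≤ ‖f (x + h • v)‖ + ‖f x‖ + ‖(f (x + h • v) - f x - fderiv ℝ f x (h • v))‖ :=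
              (norm_sub_le _ _).trans (by gcongr; exact norm_sub_le _ _)
          _ ≤ A + A + (B * h) * (h * 1) := by gcongr <;> apply hA
          _ = _ := by ring
      rw [map_smul, norm_smul, Real.norm_eq_abs, abs_of_pos hh] at h3
      rw [le_div_iff₀ hh]; linarith
    rw [le_div_iff₀ hh] at hle
    linarith
  have := discrim_le_zero (a := B) (b := -‖fderiv ℝ f x‖) (c := 2 * A) (by
    intro h
    rcases le_or_gt h 0 with hh | hh
    · have : h * ‖fderiv ℝ f x‖ ≤ 0 := mul_nonpos_of_nonpos_of_nonneg hh (norm_nonneg _)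
      have : 0 ≤ B * (h * h) := mul_nonneg hB0 (mul_self_nonneg h)
      linarith
    · have := key h hh
      nlinarith)
  unfold discrim at this
  nlinarith

theorem landau {E : Type} [NormedAddCommGroup E] [NormedSpace ℝ E] (k : ℕ) :
    ∀ {F : Type} [NormedAddCommGroup F] [NormedSpace ℝ F] (f : E → F)
    (_ : ContDiff ℝ (⊤ : ℕ∞) f)
    (A B : ℝ) (_ : ∀ x, ‖iteratedFDeriv ℝ k f x‖ ≤ A)
    (_ : ∀ x, ‖iteratedFDeriv ℝ (k + 2) f x‖ ≤ B) (x : E),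
    ‖iteratedFDeriv ℝ (k + 1) f x‖ ^ 2 ≤ 8 * A * B := by
  induction k with
  | zero =>
    intro F _ _ f hf A B hA hB x
    have := landau_base f hf A B (by simpa using hA) (by
      intro x
      have := hB x
      rw [← norm_iteratedFDeriv_fderiv] at this
      simpa using this) x
    simpa using this
  | succ k ih =>
    intro F _ _ f hf A B hA hB x
    have := ih (fderiv ℝ f) (hf.fderiv_right (by simp)) A B
      (by intro x; rw [norm_iteratedFDeriv_fderiv]; exact hA x)
      (by intro x; rw [norm_iteratedFDeriv_fderiv]; exact hB x) x
    rwa [norm_iteratedFDeriv_fderiv] at this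

/-- Discrete quasi-log-convexity. -/
theorem quasi_convex (N : ℕ) (hN : 1 ≤ N) (p : ℕ → ℝ) (hp : ∀ k, 0 ≤ p k)
    (h : ∀ k, 1 ≤ k → k + 2 ≤ N → p (k + 1) ^ 2 ≤ 64 * (p k * p (k + 2)))
    (k : ℕ) (hk1 : 1 ≤ k) (hkN : k ≤ N) : p k ≤ 8 ^ (N ^ 2) * (p 1 + p N) := by
  set q : ℕ → ℝ := fun k => p k * 8 ^ (k ^ 2) with hq
  have hq0 : ∀ k, 0 ≤ q k := fun k => mul_nonneg (hp k) (by positivity)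
  have hqc : ∀ k, 1 ≤ k → k + 2 ≤ N → q (k + 1) ^ 2 ≤ q k * q (k + 2) := by
    intro k h1 h2
    have := h k h1 h2
    have e : (8 : ℝ) ^ (k ^ 2) * 8 ^ ((k + 2) ^ 2) = 64 * (8 ^ ((k + 1) ^ 2)) ^ 2 := by
      rw [← pow_add, ← pow_mul, show (64 : ℝ) = 8 ^ 2 by norm_num, ← pow_add]
      congr 1; ring
    calc q (k + 1) ^ 2 = p (k + 1) ^ 2 * (8 ^ ((k + 1) ^ 2)) ^ 2 := by simp only [hq]; ring
      _ ≤ (64 * (p k * p (k + 2))) * (8 ^ ((k + 1) ^ 2)) ^ 2 := by gcongr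
      _ = (p k * p (k + 2)) * (64 * (8 ^ ((k + 1) ^ 2)) ^ 2) := by ring
      _ = (p k * p (k + 2)) * (8 ^ (k ^ 2) * 8 ^ ((k + 2) ^ 2)) := by rw [e]
      _ = q k * q (k + 2) := by simp only [hq]; ring
  have main : ∀ k, 1 ≤ k → k ≤ N → q k ≤ max (q 1) (q N) := by
    obtain ⟨m, hm, hmax⟩ := Finset.exists_max_image (Finset.Icc 1 N) q ⟨1, by simp [hN]⟩
    have hex : ∃ j, j ∈ Finset.Icc 1 N ∧ q m ≤ q j := ⟨m, hm, le_rfl⟩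
    classical
    obtain ⟨hj, hjm⟩ := Nat.find_spec hex
    have hmin := fun i hi => Nat.find_min hex (m := i) hi
    generalize Nat.find hex = j at hj hjm hmin
    rw [Finset.mem_Icc] at hj
    intro k hk1 hk2
    refine (hmax k (Finset.mem_Icc.2 ⟨hk1, hk2⟩)).trans (hjm.trans ?_)
    rcases Nat.eq_or_lt_of_le hj.1 with e | h1
    · rw [← e]; exact le_max_left _ _
    rcases Nat.eq_or_lt_of_le hj.2 with e | h2
    · rw [e]; exact le_max_right _ _
    obtain ⟨i, rfl⟩ : ∃ i, j = i + 1 := ⟨j - 1, by omega⟩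
    have hc := hqc i (by omega) (by omega)
    have hi : q i < q m := by
      have := hmin i (by omega)
      rw [Finset.mem_Icc] at this
      by_contra hcon
      exact this ⟨⟨by omega, by omega⟩, not_lt.1 hcon⟩
    have hi2 := hmax (i + 2) (Finset.mem_Icc.2 ⟨by omega, by omega⟩)
    exfalso
    have := hq0 i
    have := hq0 (i + 2)
    nlinarith
  have h1 := main k hk1 hkN
  have h2 : p k ≤ q k := by
    simp only [hq]
    exact le_mul_of_one_le_right (hp k) (one_le_pow₀ (by norm_num))
  have h3 : q 1 ≤ 8 ^ (N ^ 2) * p 1 := by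
    simp only [hq]; rw [mul_comm]
    gcongr
    · exact hp 1
    · norm_num
  have h4 : q N = 8 ^ (N ^ 2) * p N := by simp only [hq]; rw [mul_comm]
  have h5 : max (q 1) (q N) ≤ q 1 + q N := max_le (by linarith [hq0 N]) (by linarith [hq0 1])
  rw [mul_add]
  linarith

theorem fderiv_iteratedFDeriv_comm {E : Type} [NormedAddCommGroup E] [NormedSpace ℝ E] (k : ℕ) :
    ∀ {F : Type} [NormedAddCommGroup F] [NormedSpace ℝ F] (f : E → F)
    (_ : ContDiff ℝ (⊤ : ℕ∞) f) (p v : E),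
    fderiv ℝ (iteratedFDeriv ℝ k f) p v = iteratedFDeriv ℝ k (fun q => fderiv ℝ f q v) p := by
  induction k with
  | zero =>
    intro F _ _ f hf p v
    rw [iteratedFDeriv_zero_eq_comp, iteratedFDeriv_zero_eq_comp]
    rw [LinearIsometryEquiv.comp_fderiv]
    rfl
  | succ k ih =>
    intro F _ _ f hf p v
    have hf' : ContDiff ℝ (⊤ : ℕ∞) (fderiv ℝ f) := hf.fderiv_right (by simp)
    have hd' : Differentiable ℝ (fderiv ℝ f) := hf'.differentiable (by simp)
    have e : fderiv ℝ (fun q => fderiv ℝ f q v) = fun q => fderiv ℝ (fderiv ℝ f) q v := by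
      funext q
      ext w
      rw [fderiv_clm_apply (hd' q) (differentiableAt_const v)]
      have := (hf.contDiffAt (x := q)).isSymmSndFDerivAt
        (by simp only [minSmoothness_of_isRCLikeNormedField]; exact WithTop.coe_le_coe.2 (le_top : (2 : ℕ∞) ≤ ⊤))
      simpa using (this v w).symm
    have e1 : iteratedFDeriv ℝ (k + 1) f =
        (continuousMultilinearCurryRightEquiv' ℝ k E F).symm ∘ iteratedFDeriv ℝ k (fderiv ℝ f) := by
      funext x; exact iteratedFDeriv_succ_eq_comp_right
    have hk : ContDiff ℝ (⊤ : ℕ∞) (iteratedFDeriv ℝ k (fderiv ℝ f)) :=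
      hf'.iteratedFDeriv_right (by exact_mod_cast le_top)
    have h3 := ((continuousMultilinearCurryRightEquiv' ℝ k E F).symm.toContinuousLinearEquiv.hasFDerivAt.comp p
      (hk.differentiable (by simp) p).hasFDerivAt).fderiv
    have h4 : fderiv ℝ ((continuousMultilinearCurryRightEquiv' ℝ k E F).symm ∘
      iteratedFDeriv ℝ k (fderiv ℝ f)) p = _ := h3
    rw [e1, iteratedFDeriv_succ_eq_comp_right, h4]
    have := ih (fderiv ℝ f) hf' p v
    simp only [ContinuousLinearMap.comp_apply, Function.comp_apply]
    rw [e, ← this]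
    rfl

/-- spatial iterated derivative -/
def spD {F : Type} [NormedAddCommGroup F] [NormedSpace ℝ F] (k : ℕ) (f : E2 × ℝ → F)
    (p : E2 × ℝ) : ContinuousMultilinearMap ℝ (fun _ : Fin k => E2) F :=
  iteratedFDeriv ℝ k (fun y => f (y, p.2)) p.1

theorem contDiff_slice {F : Type} [NormedAddCommGroup F] [NormedSpace ℝ F] {f : E2 × ℝ → F}
    (hf : ContDiff ℝ (⊤ : ℕ∞) f) (t : ℝ) : ContDiff ℝ (⊤ : ℕ∞) (fun y => f (y, t)) :=
  hf.comp (contDiff_id.prodMk contDiff_const)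

theorem spD_eq {F : Type} [NormedAddCommGroup F] [NormedSpace ℝ F] (k : ℕ) {f : E2 × ℝ → F}
    (hf : ContDiff ℝ (⊤ : ℕ∞) f) :
    spD k f = fun p => ContinuousMultilinearMap.compContinuousLinearMapL
      (fun _ : Fin k => ContinuousLinearMap.inl ℝ E2 ℝ) (iteratedFDeriv ℝ k f p) := by
  funext p
  unfold spD
  have e : (fun y => f (y, p.2)) = (fun q => f (q + (0, p.2))) ∘ (ContinuousLinearMap.inl ℝ E2 ℝ) := by
    funext y; simp
  have hg : ContDiff ℝ (⊤ : ℕ∞) (fun q => f (q + ((0 : E2), p.2))) :=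
    hf.comp (contDiff_id.add contDiff_const)
  rw [e, ContinuousLinearMap.iteratedFDeriv_comp_right _ hg _ (i := k) (by exact_mod_cast le_top),
    iteratedFDeriv_comp_add_right]
  simp [ContinuousMultilinearMap.compContinuousLinearMapL]

theorem spD_contDiff {F : Type} [NormedAddCommGroup F] [NormedSpace ℝ F] (k : ℕ) {f : E2 × ℝ → F}
    (hf : ContDiff ℝ (⊤ : ℕ∞) f) : ContDiff ℝ (⊤ : ℕ∞) (spD k f) := by
  rw [spD_eq k hf]
  exact (ContinuousLinearMap.contDiff _).comp (hf.iteratedFDeriv_right (by exact_mod_cast le_top))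

theorem spD_fderiv {F : Type} [NormedAddCommGroup F] [NormedSpace ℝ F] (k : ℕ) {f : E2 × ℝ → F}
    (hf : ContDiff ℝ (⊤ : ℕ∞) f) (p v : E2 × ℝ) :
    fderiv ℝ (spD k f) p v = spD k (fun q => fderiv ℝ f q v) p := by
  have hf' : ContDiff ℝ (⊤ : ℕ∞) (fderiv ℝ f) := hf.fderiv_right (by simp)
  have hk : ContDiff ℝ (⊤ : ℕ∞) (iteratedFDeriv ℝ k f) :=
    hf.iteratedFDeriv_right (by exact_mod_cast le_top)
  rw [spD_eq k hf, spD_eq k (hf'.clm_apply contDiff_const)]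
  beta_reduce
  rw [← fderiv_iteratedFDeriv_comm k f hf]
  have := ((ContinuousMultilinearMap.compContinuousLinearMapL (F := F)
      (fun _ : Fin k => ContinuousLinearMap.inl ℝ E2 ℝ)).hasFDerivAt.comp p
        (hk.differentiable (by simp) p).hasFDerivAt).fderiv
  have e : fderiv ℝ (fun p => ContinuousMultilinearMap.compContinuousLinearMapL
      (fun _ : Fin k => ContinuousLinearMap.inl ℝ E2 ℝ) (iteratedFDeriv ℝ k f p)) p = _ := this
  rw [e]
  rfl

theorem periodic_bounded {h : E2 × ℝ → ℝ} (hc : Continuous h)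
    (hp : ∀ (x : E2) (t : ℝ) (i : Fin 2),
      h (x + (2 * π) • EuclideanSpace.single i 1, t) = h (x, t)) (a b : ℝ) :
    ∃ M : ℝ, ∀ x, ∀ t ∈ Set.Icc a b, h (x, t) ≤ M := by
  have hcomp : IsCompact ((Metric.closedBall (0 : E2) (4 * π)) ×ˢ Set.Icc a b) :=
    (isCompact_closedBall _ _).prod isCompact_Icc
  obtain ⟨M, hM⟩ := hcomp.bddAbove_image hc.continuousOn
  refine ⟨M, fun x t ht => ?_⟩
  have hper : ∀ i : Fin 2, Function.Periodic (fun x => h (x, t))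
      ((2 * π) • (EuclideanSpace.single i (1 : ℝ) : E2)) := fun i x => hp x t i
  set n : Fin 2 → ℤ := fun i => ⌊x i / (2 * π)⌋ with hn
  set c : Fin 2 → E2 := fun i => (2 * π) • (EuclideanSpace.single i (1 : ℝ) : E2) with hcdef
  set y : E2 := x - n 0 • c 0 - n 1 • c 1 with hy
  have e : h (x, t) = h (y, t) := by
    have h0 := (hper 0).zsmul (n 0)
    have h1 := (hper 1).zsmul (n 1)
    have := h1.sub_eq (x - n 0 • c 0)
    have h3 := h0.sub_eq x
    exact (this.trans h3).symm
  rw [e]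
  apply hM
  refine ⟨(y, t), ⟨?_, ht⟩, rfl⟩
  have hyi : ∀ i, y i = x i - n i * (2 * π) := by
    intro i
    fin_cases i <;> simp [hy, hcdef]
  have hpi := Real.pi_pos
  have hyb : ∀ i, ‖y i‖ ≤ 2 * π := by
    intro i
    have h1 := Int.floor_le (x i / (2 * π))
    have h2 := Int.lt_floor_add_one (x i / (2 * π))
    rw [le_div_iff₀ (by positivity)] at h1
    rw [div_lt_iff₀ (by positivity)] at h2
    rw [hyi i, Real.norm_eq_abs, abs_le]
    constructor <;> simp only [hn] <;> nlinarith
  rw [mem_closedBall_zero_iff, EuclideanSpace.norm_eq, Fin.sum_univ_two]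
  rw [Real.sqrt_le_left (by positivity)]
  have a0 := hyb 0
  have a1 := hyb 1
  have b0 := norm_nonneg (y 0)
  have b1 := norm_nonneg (y 1)
  nlinarith

theorem spD_bounded_u (k : ℕ) {u : E2 × ℝ → E2} (hu : ContDiff ℝ (⊤ : ℕ∞) u)
    (hp : ∀ (x : E2) (t : ℝ) (i : Fin 2),
      u (x + (2 * π) • EuclideanSpace.single i 1, t) = u (x, t)) (a b : ℝ) :
    ∃ M : ℝ, ∀ x, ∀ t ∈ Set.Icc a b, ‖spD k u (x, t)‖ ≤ M := by
  refine periodic_bounded (h := fun p => ‖spD k u p‖) (spD_contDiff k hu).continuous.norm ?_ a b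
  intro x t i
  simp only [spD]
  rw [← iteratedFDeriv_comp_add_right]
  simp only [hp]

theorem norm_iteratedFDeriv_succ_add_const {F : Type} [NormedAddCommGroup F] [NormedSpace ℝ F]
    (k : ℕ) (f : E2 → F) (c : F) (x : E2) :
    ‖iteratedFDeriv ℝ (k + 1) (fun y => f y + c) x‖ = ‖iteratedFDeriv ℝ (k + 1) f x‖ := by
  rw [← norm_iteratedFDeriv_fderiv, ← norm_iteratedFDeriv_fderiv]
  congr 2
  funext y
  exact fderiv_add_const c

theorem spD_bounded_Phi (k : ℕ) {u : E2 × ℝ → E2} (hu : ContDiff ℝ (⊤ : ℕ∞) u)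
    (hp : ∀ (x : E2) (t : ℝ) (i : Fin 2),
      u (x + (2 * π) • EuclideanSpace.single i 1, t) - (x + (2 * π) • EuclideanSpace.single i 1)
        = u (x, t) - x) (a b : ℝ) :
    ∃ M : ℝ, ∀ x, ∀ t ∈ Set.Icc a b, ‖spD (k + 1) u (x, t)‖ ≤ M := by
  refine periodic_bounded (h := fun p => ‖spD (k + 1) u p‖)
    (spD_contDiff (k + 1) hu).continuous.norm ?_ a b
  intro x t i
  simp only [spD]
  rw [← iteratedFDeriv_comp_add_right]
  have : ∀ y, u (y + (2 * π) • EuclideanSpace.single i 1, t)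
      = u (y, t) + (2 * π) • EuclideanSpace.single i 1 := by
    intro y
    have := hp y t i
    rw [sub_eq_iff_eq_add] at this
    rw [this]; abel
  simp only [this]
  exact norm_iteratedFDeriv_succ_add_const k (fun y => u (y, t)) _ x

theorem exists_traj {u : E2 × ℝ → E2} (hu : ContDiff ℝ (⊤ : ℕ∞) u) {t₀ T L : ℝ}
    (hL : ∀ x, ∀ t ∈ Set.Icc t₀ T, ‖u (x, t)‖ ≤ L) (x : E2) (t : ℝ) (ht : t ∈ Set.Icc t₀ T)  :
    ∃ γ : ℝ → E2, γ t = x ∧ ∀ s ∈ Set.Icc t₀ t,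
      HasDerivWithinAt γ (u (γ s, s)) (Set.Icc t₀ t) s := by
  have hL0 : 0 ≤ L := (norm_nonneg _).trans (hL x t ht)
  have hsub : Set.Icc t₀ t ⊆ Set.Icc t₀ T := Set.Icc_subset_Icc_right ht.2
  set a : NNReal := ⟨L * (t - t₀), mul_nonneg hL0 (sub_nonneg.2 ht.1)⟩ with ha
  obtain ⟨K, hK⟩ : ∃ K : NNReal, ∀ s ∈ Set.Icc t₀ t,
      LipschitzOnWith K (fun y => u (y, s)) (Metric.closedBall x a) := by
    have hcomp : IsCompact ((Metric.closedBall x a) ×ˢ Set.Icc t₀ t) :=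
      (isCompact_closedBall _ _).prod isCompact_Icc
    have hcont : Continuous (fun p => ‖fderiv ℝ u p‖) :=
      (hu.continuous_fderiv (by simp)).norm
    obtain ⟨M, hM⟩ := hcomp.bddAbove_image hcont.continuousOn
    have hd : Differentiable ℝ u := hu.differentiable (by simp)
    refine ⟨M.toNNReal, fun s hs => ?_⟩
    refine Convex.lipschitzOnWith_of_nnnorm_hasFDerivWithin_le (𝕜 := ℝ)
      (f' := fun y => (fderiv ℝ u (y, s)).comp (ContinuousLinearMap.inl ℝ E2 ℝ)) ?_ ?_
      (convex_closedBall _ _)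
    · intro y hy
      exact ((hd (y, s)).hasFDerivAt.comp y (hasFDerivAt_prodMk_left y s)).hasFDerivWithinAt
    · intro y hy
      rw [← NNReal.coe_le_coe, coe_nnnorm]
      refine le_trans ?_ (Real.le_coe_toNNReal M)
      refine (ContinuousLinearMap.opNorm_comp_le _ _).trans ?_
      refine le_trans ?_ (hM ⟨(y, s), ⟨hy, hs⟩, rfl⟩)
      refine mul_le_of_le_one_right (norm_nonneg _) (ContinuousLinearMap.norm_inl_le_one ℝ E2 ℝ)
  have hPL : IsPicardLindelof (fun s y => u (y, s)) (tmin := t₀) (tmax := t)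
      ⟨t, ht.1, le_rfl⟩ x a 0 ⟨L, hL0⟩ K :=
    { lipschitzOnWith := hK
      continuousOn := fun y _ => (hu.continuous.comp (by fun_prop)).continuousOn
      norm_le := fun s hs y _ => hL y s (hsub hs)
      mul_max_le := by
        have h1 : max (t - t) (t - t₀) = t - t₀ := by
          rw [sub_self]; exact max_eq_right (sub_nonneg.2 ht.1)
        change L * max (t - t) (t - t₀) ≤ L * (t - t₀) - 0
        rw [h1, sub_zero] }
  exact hPL.exists_eq_forall_mem_Icc_hasDerivWithinAt₀

/-- Grönwall along characteristics. -/
theorem transport_gronwall {V : Type} [NormedAddCommGroup V] [NormedSpace ℝ V]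
    {u : E2 × ℝ → E2} (hu : ContDiff ℝ (⊤ : ℕ∞) u) {t₀ T L : ℝ}
    (hL : ∀ x, ∀ t ∈ Set.Icc t₀ T, ‖u (x, t)‖ ≤ L)
    {G : E2 × ℝ → V} (hG : Differentiable ℝ G) {a b c M : ℝ} 
    (hb : 0 ≤ b) (hM : ∀ x, ∀ t ∈ Set.Icc t₀ T, ‖G (x, t)‖ ≤ M)
    (h0 : ∀ x, ‖G (x, t₀)‖ ≤ c)
    (hH : ∀ t ∈ Set.Icc t₀ T, ∀ m, (∀ x, ‖G (x, t)‖ ≤ m) →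
      ∀ x, ‖fderiv ℝ G (x, t) (u (x, t), 1)‖ ≤ a * m + b * Real.exp (a * (t - t₀)))
    (x : E2) (t : ℝ) (ht : t ∈ Set.Icc t₀ T) :
    ‖G (x, t)‖ ≤ (c + b * (t - t₀)) * Real.exp (a * (t - t₀)) := by
  have it : ∀ n : ℕ, ∀ x, ∀ t ∈ Set.Icc t₀ T, ‖G (x, t)‖ ≤
      (c + b * (t - t₀)) * Real.exp (a * (t - t₀)) +
        M * ((a * (t - t₀)) ^ n / (n.factorial : ℝ)) := by
    intro n
    induction n with
    | zero =>
      intro x t ht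
      have hc : 0 ≤ c := (norm_nonneg _).trans (h0 x)
      have h1 := hM x t ht
      have h2 : 0 ≤ t - t₀ := sub_nonneg.2 ht.1
      have h3 : 0 ≤ (c + b * (t - t₀)) * Real.exp (a * (t - t₀)) := by positivity
      simp only [pow_zero, Nat.factorial_zero, Nat.cast_one, div_one, mul_one]
      linarith
    | succ n ih =>
      intro x t ht
      obtain ⟨γ, hγt, hγ⟩ := exists_traj hu hL x t ht
      have hsub : Set.Icc t₀ t ⊆ Set.Icc t₀ T := Set.Icc_subset_Icc_right ht.2
      have hder : ∀ s ∈ Set.Icc t₀ t, HasDerivWithinAt (fun s => G (γ s, s))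
          (fderiv ℝ G (γ s, s) (u (γ s, s), 1)) (Set.Icc t₀ t) s := by
        intro s hs
        exact HasFDerivAt.comp_hasDerivWithinAt (f := fun s => (γ s, s)) s (hG (γ s, s)).hasFDerivAt
          ((hγ s hs).prodMk (hasDerivWithinAt_id s _))
      have key := image_norm_le_of_norm_deriv_right_le_deriv_boundary
        (f := fun s => G (γ s, s)) (f' := fun s => fderiv ℝ G (γ s, s) (u (γ s, s), 1))
        (a := t₀) (b := t)
        (B := fun t => (c + b * (t - t₀)) * Real.exp (a * (t - t₀)) +
          M * ((a * (t - t₀)) ^ (n + 1) / ((n + 1).factorial : ℝ)))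
        (B' := fun t => a * ((c + b * (t - t₀)) * Real.exp (a * (t - t₀)) +
          M * ((a * (t - t₀)) ^ n / (n.factorial : ℝ))) + b * Real.exp (a * (t - t₀)))
        (fun s hs => (hder s hs).continuousWithinAt)
        (fun s hs => (hder s (Set.Ico_subset_Icc_self hs)).mono_of_mem_nhdsWithin
          (Icc_mem_nhdsGE_of_mem hs))
        (by simpa using h0 (γ t₀)) ?_ ?_ (Set.right_mem_Icc.2 ht.1)
      · simpa only [hγt] using key
      · intro s
        have h1 : HasDerivAt (fun s : ℝ => s - t₀) 1 s := (hasDerivAt_id s).sub_const t₀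
        have h2 : HasDerivAt (fun s : ℝ => a * (s - t₀)) (a * 1) s := h1.const_mul a
        have h3 := ((h1.const_mul b).const_add c).mul h2.exp
        have h4 := ((h2.pow (n + 1)).div_const ((n + 1).factorial : ℝ)).const_mul M
        have h5 := h3.add h4
        refine HasDerivAt.congr_deriv h5 ?_
        have hf : ((n.factorial : ℕ) : ℝ) ≠ 0 := by positivity
        rw [Nat.factorial_succ]
        push_cast
        field_simp
        ring
      · intro s hs
        have hs' := hsub (Set.Ico_subset_Icc_self hs)
        exact hH s hs' _ (fun y => ih y s hs') (γ s)
  have hlim : Filter.Tendsto (fun n : ℕ => (c + b * (t - t₀)) * Real.exp (a * (t - t₀)) +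
        M * ((a * (t - t₀)) ^ n / (n.factorial : ℝ))) Filter.atTop
        (nhds ((c + b * (t - t₀)) * Real.exp (a * (t - t₀)) + M * 0)) :=
    ((FloorSemiring.tendsto_pow_div_factorial_atTop (a * (t - t₀))).const_mul M).const_add _
  have := ge_of_tendsto' hlim (fun n => it n x t ht)
  simpa using this

theorem slice_fderiv {F : Type} [NormedAddCommGroup F] [NormedSpace ℝ F] {f : E2 × ℝ → F}
    (hf : ContDiff ℝ (⊤ : ℕ∞) f) (x : E2) (t : ℝ) (w : E2) :
    fderiv ℝ (fun y => f (y, t)) x w = fderiv ℝ f (x, t) (w, 0) := by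
  have hd : Differentiable ℝ f := hf.differentiable (by simp)
  have := (HasFDerivAt.comp (f := fun y : E2 => (y, t)) x (hd (x, t)).hasFDerivAt (hasFDerivAt_prodMk_left x t)).fderiv
  have e : fderiv ℝ (fun y => f (y, t)) x = _ := this
  rw [e]; simp

theorem slice_deriv {F : Type} [NormedAddCommGroup F] [NormedSpace ℝ F] {f : E2 × ℝ → F}
    (hf : ContDiff ℝ (⊤ : ℕ∞) f) (x : E2) (t : ℝ) :
    deriv (fun s => f (x, s)) t = fderiv ℝ f (x, t) (0, 1) := by
  have hd : Differentiable ℝ f := hf.differentiable (by simp)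
  have := ((hd (x, t)).hasFDerivAt.comp_hasDerivAt t
    ((hasDerivAt_const t x).prodMk (hasDerivAt_id t))).deriv
  exact this

theorem transport_rhs_bound {u Φ : E2 × ℝ → E2} (hu : ContDiff ℝ (⊤ : ℕ∞) u)
    (hΦ : ContDiff ℝ (⊤ : ℕ∞) Φ) (t : ℝ)
    (heq : ∀ x, deriv (fun s => Φ (x, s)) t + fderiv ℝ (fun y => Φ (y, t)) x (u (x, t)) = 0)
    (N : ℕ) (x : E2) :
    ‖fderiv ℝ (spD N Φ) (x, t) (u (x, t), 1)‖ ≤ ∑ i ∈ Finset.range N,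
      (N.choose i : ℝ) * ‖spD (i + 1) Φ (x, t)‖ * ‖spD (N - i) u (x, t)‖ := by
  rw [spD_fderiv N hΦ]
  have e : (fun y => fderiv ℝ Φ (y, t) (u (x, t), 1))
      = fun y => (fderiv ℝ (fun z => Φ (z, t)) y) (u (x, t) + (-1 : ℝ) • u (y, t)) := by
    funext y
    have h := heq y
    rw [slice_deriv hΦ, slice_fderiv hΦ, ← map_add] at h
    rw [slice_fderiv hΦ]
    have : ((u (x, t), 1) : E2 × ℝ) = (u (x, t) + (-1 : ℝ) • u (y, t), 0) + ((0, 1) + (u (y, t), 0)) := by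
      ext1 <;> simp
    rw [this, map_add, h, add_zero]
  have hΦt := contDiff_slice hΦ t
  have hut := contDiff_slice hu t
  have hg : ContDiff ℝ (⊤ : ℕ∞) (fun y => u (x, t) + (-1 : ℝ) • u (y, t)) :=
    contDiff_const.add (hut.const_smul (-1 : ℝ))
  have hmain := norm_iteratedFDeriv_clm_apply (f := fderiv ℝ (fun z => Φ (z, t)))
    (g := fun y => u (x, t) + (-1 : ℝ) • u (y, t)) (n := N) (N := ((⊤ : ℕ∞) : WithTop ℕ∞))
    (hΦt.fderiv_right (by simp)) hg x (by exact_mod_cast le_top)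
  change ‖iteratedFDeriv ℝ N (fun y => fderiv ℝ Φ (y, t) (u (x, t), 1)) x‖ ≤ _
  rw [e]
  refine hmain.trans ?_
  rw [Finset.sum_range_succ]
  have hz : ‖iteratedFDeriv ℝ (N - N) (fun y => u (x, t) + (-1 : ℝ) • u (y, t)) x‖ = 0 := by
    rw [Nat.sub_self, norm_iteratedFDeriv_zero]; simp
  rw [hz, mul_zero, add_zero]
  refine Finset.sum_le_sum fun i hi => ?_
  rw [Finset.mem_range] at hi
  obtain ⟨j, hj⟩ : ∃ j, N - i = j + 1 := ⟨N - i - 1, by omega⟩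
  rw [hj, norm_iteratedFDeriv_fderiv]
  have h2 : ‖iteratedFDeriv ℝ (j + 1) (fun y => u (x, t) + (-1 : ℝ) • u (y, t)) x‖
      = ‖spD (j + 1) u (x, t)‖ := by
    have := norm_iteratedFDeriv_succ_add_const j (fun y => (-1 : ℝ) • u (y, t)) (u (x, t)) x
    simp only [add_comm (u (x, t))]
    rw [this]
    simp only [spD]
    rw [iteratedFDeriv_const_smul_apply' ((hut.of_le (by exact_mod_cast le_top)).contDiffAt)]
    simp
  rw [h2]
  rfl

theorem double_sup_le {h : E2 × ℝ → ℝ} {t₀ T M : ℝ} (hT : t₀ < T)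
    (hM : ∀ x, ∀ t ∈ Set.Icc t₀ T, h (x, t) ≤ M) (x : E2) (t : ℝ) (ht : t ∈ Set.Icc t₀ T) :
    h (x, t) ≤ ⨆ (x : E2) (s : Set.Icc t₀ T), h (x, (s : ℝ)) := by
  have : Nonempty (Set.Icc t₀ T) := ⟨⟨t₀, le_rfl, hT.le⟩⟩
  refine le_trans (b := ⨆ (s : Set.Icc t₀ T), h (x, (s : ℝ))) ?_ ?_
  · exact le_ciSup (f := fun s : Set.Icc t₀ T => h (x, (s : ℝ)))
      ⟨M, by rintro _ ⟨s, rfl⟩; exact hM x s s.2⟩ ⟨t, ht⟩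
  · exact le_ciSup (f := fun x => ⨆ (s : Set.Icc t₀ T), h (x, (s : ℝ)))
      ⟨M, by rintro _ ⟨s, rfl⟩; exact ciSup_le fun r => hM s r r.2⟩ x

/-- Higher-derivative estimate for the back-to-labels map `Φ`, solving
`∂ₜ Φ + u·∇Φ = 0`, `Φ(x,t₀) = x` (with a constant `C = C(N)`):
`‖D^N Φ(·,t)‖_{C⁰} ≤ C (t−t₀) ‖D^N u‖_{C⁰} e^{C (t−t₀) ‖Du‖_{C⁰}}`. -/
theorem back_to_labels_higher_derivative_estimate :
    ∀ N : ℕ, 2 ≤ N → ∃ C : ℝ,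
    ∀ (t₀ T : ℝ), t₀ < T →
    ∀ (u : E2 × ℝ → E2) (Φ : E2 × ℝ → E2),
    ContDiff ℝ (⊤ : ℕ∞) u →
    (∀ (x : E2) (t : ℝ) (i : Fin 2),
      u (x + (2 * π) • EuclideanSpace.single i 1, t) = u (x, t)) →
    ContDiff ℝ (⊤ : ℕ∞) Φ →
    (∀ (x : E2) (t : ℝ) (i : Fin 2),
      Φ (x + (2 * π) • EuclideanSpace.single i 1, t) - (x + (2 * π) • EuclideanSpace.single i 1)
        = Φ (x, t) - x) →
    (∀ x, Φ (x, t₀) = x) →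
    (∀ (x : E2), ∀ t ∈ Set.Icc t₀ T,
      deriv (fun s => Φ (x, s)) t + fderiv ℝ (fun y => Φ (y, t)) x (u (x, t)) = 0) →
    ∀ t ∈ Set.Icc t₀ T,
      (⨆ x : E2, ‖iteratedFDeriv ℝ N (fun y => Φ (y, t)) x‖)
        ≤ C * (t - t₀) * supDNu N u t₀ T * Real.exp (C * (t - t₀) * supDu u t₀ T) := by
  intro N hN
  refine ⟨2 ^ N * 8 ^ (N ^ 2), ?_⟩
  intro t₀ T hT u Φ hu hup hΦ hΦp hstart heq t ht
  set C : ℝ := 2 ^ N * 8 ^ (N ^ 2) with hC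
  have hC1 : 1 ≤ C := by
    have h1 : (1 : ℝ) ≤ 2 ^ N := one_le_pow₀ (by norm_num)
    have h2 : (1 : ℝ) ≤ 8 ^ (N ^ 2) := one_le_pow₀ (by norm_num)
    nlinarith
  -- bounds on u
  have hub : ∀ k x, ∀ s ∈ Set.Icc t₀ T, ‖spD k u (x, s)‖ ≤ supDNu k u t₀ T := by
    intro k x s hs
    obtain ⟨M, hM⟩ := spD_bounded_u k hu hup t₀ T
    exact double_sup_le (h := fun p => ‖spD k u p‖) hT hM x s hs
  have hU0 : ∀ k, 0 ≤ supDNu k u t₀ T := fun k =>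
    (norm_nonneg _).trans (hub k 0 t₀ ⟨le_rfl, hT.le⟩)
  have hU1 : supDu u t₀ T = supDNu 1 u t₀ T := by
    unfold supDu supDNu
    simp only [norm_iteratedFDeriv_one]
  set U : ℕ → ℝ := fun k => supDNu k u t₀ T with hUdef
  obtain ⟨L, hL⟩ : ∃ L, ∀ x, ∀ t ∈ Set.Icc t₀ T, ‖u (x, t)‖ ≤ L := by
    refine ⟨U 0, fun x s hs => ?_⟩
    have := hub 0 x s hs
    simpa [spD] using this
  have hUL : ∀ k, U (k + 1) ^ 2 ≤ 8 * U k * U (k + 2) := by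
    intro k
    have hs : ∀ x, ∀ s ∈ Set.Icc t₀ T, ‖spD (k + 1) u (x, s)‖ ≤ √(8 * U k * U (k + 2)) := by
      intro x s hs
      apply Real.le_sqrt_of_sq_le
      exact landau k (fun y => u (y, s)) (contDiff_slice hu s) (U k) (U (k + 2))
        (fun y => hub k y s hs) (fun y => hub (k + 2) y s hs) x
    have : U (k + 1) ≤ √(8 * U k * U (k + 2)) := by
      have : Nonempty (Set.Icc t₀ T) := ⟨⟨t₀, le_rfl, hT.le⟩⟩
      exact ciSup_le fun x => ciSup_le fun s => hs x s s.2
    have hnn : 0 ≤ 8 * U k * U (k + 2) :=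
      mul_nonneg (mul_nonneg (by norm_num) (hU0 k)) (hU0 (k + 2))
    calc U (k + 1) ^ 2 ≤ √(8 * U k * U (k + 2)) ^ 2 := pow_le_pow_left₀ (hU0 _) this 2
      _ = _ := Real.sq_sqrt hnn
  -- first derivative of Φ
  have hΦ1 : ∀ x, ∀ s ∈ Set.Icc t₀ T, ‖spD 1 Φ (x, s)‖ ≤ Real.exp (U 1 * (s - t₀)) := by
    obtain ⟨M, hM⟩ := spD_bounded_Phi 0 hΦ hΦp t₀ T
    intro x s hs
    have := transport_gronwall hu hL (G := spD 1 Φ) (a := U 1) (b := 0) (c := 1) (M := M)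
      ((spD_contDiff 1 hΦ).differentiable (by simp)) le_rfl hM ?_ ?_ x s hs
    · simpa using this
    · intro x
      simp only [spD, hstart, norm_iteratedFDeriv_one]
      rw [fderiv_fun_id]
      exact ContinuousLinearMap.norm_id_le
    · intro r hr m hm y
      have h1 := transport_rhs_bound hu hΦ r (fun x => heq x r hr) 1 y
      simp only [Finset.sum_range_one, Nat.choose_zero_right, Nat.cast_one, one_mul,
        Nat.sub_zero] at h1
      rw [zero_mul, add_zero]
      refine h1.trans ?_
      rw [mul_comm]
      exact mul_le_mul (hub 1 y r hr) (hm y) (norm_nonneg _) (hU0 1)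
  -- top derivative
  have hfin : ∀ x, ‖spD N Φ (x, t)‖ ≤
      (0 + (C * U N) * (t - t₀)) * Real.exp ((C * U 1) * (t - t₀)) := by
    obtain ⟨N', hN'⟩ : ∃ N', N = N' + 1 := ⟨N - 1, by omega⟩
    obtain ⟨M, hM⟩ := spD_bounded_Phi N' hΦ hΦp t₀ T
    rw [← hN'] at hM
    intro x
    refine transport_gronwall hu hL (G := spD N Φ) (a := C * U 1) (b := C * U N) (c := 0) (M := M)
      ((spD_contDiff N hΦ).differentiable (by simp))
      (mul_nonneg (by linarith) (hU0 N)) hM ?_ ?_ x t ht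
    · intro x
      obtain ⟨j, hj⟩ : ∃ j, N = j + 1 + 1 := ⟨N - 2, by omega⟩
      simp only [spD, hstart]
      rw [hj, ← norm_iteratedFDeriv_fderiv]
      have : fderiv ℝ (fun y : E2 => y) = fun _ => ContinuousLinearMap.id ℝ E2 := by
        funext y; exact fderiv_fun_id
      rw [this, iteratedFDeriv_succ_const]
      simp
    · intro s hs m hm y
      -- sup norms of derivatives of Φ at time s
      set b : ℕ → ℝ := fun k => ⨆ x : E2, ‖spD k Φ (x, s)‖ with hbdef
      have hbdd : ∀ k, 1 ≤ k → ∀ x, ‖spD k Φ (x, s)‖ ≤ b k := by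
        intro k hk x
        obtain ⟨k', rfl⟩ : ∃ k', k = k' + 1 := ⟨k - 1, by omega⟩
        obtain ⟨M, hM⟩ := spD_bounded_Phi k' hΦ hΦp t₀ T
        exact le_ciSup (f := fun x => ‖spD (k' + 1) Φ (x, s)‖)
          ⟨M, by rintro _ ⟨z, rfl⟩; exact hM z s hs⟩ x
      have hb0 : ∀ k, 0 ≤ b k := fun k => Real.iSup_nonneg fun x => norm_nonneg _
      have hbL : ∀ k, 1 ≤ k → b (k + 1) ^ 2 ≤ 8 * b k * b (k + 2) := by
        intro k hk
        have hnn : 0 ≤ 8 * b k * b (k + 2) :=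
          mul_nonneg (mul_nonneg (by norm_num) (hb0 k)) (hb0 (k + 2))
        have : b (k + 1) ≤ √(8 * b k * b (k + 2)) := by
          refine ciSup_le fun x => Real.le_sqrt_of_sq_le ?_
          exact landau k (fun y => Φ (y, s)) (contDiff_slice hΦ s) (b k) (b (k + 2))
            (fun y => hbdd k hk y) (fun y => hbdd (k + 2) (by omega) y) x
        calc b (k + 1) ^ 2 ≤ √(8 * b k * b (k + 2)) ^ 2 := pow_le_pow_left₀ (hb0 _) this 2
          _ = _ := Real.sq_sqrt hnn
      have hbN : b N ≤ m := ciSup_le hm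
      have hb1 : b 1 ≤ Real.exp (C * U 1 * (s - t₀)) := by
        refine ciSup_le fun x => (hΦ1 x s hs).trans ?_
        apply Real.exp_le_exp.2
        have h1 : U 1 ≤ C * U 1 := le_mul_of_one_le_left (hU0 1) hC1
        exact mul_le_mul_of_nonneg_right h1 (sub_nonneg.2 hs.1)
      have hq := quasi_convex N (by omega) (fun k => U k * b (N + 1 - k))
        (fun k => mul_nonneg (hU0 k) (hb0 _)) (by
          intro k hk1 hk2
          obtain ⟨l, hl⟩ : ∃ l, N = k + 1 + l := ⟨N - k - 1, by omega⟩
          have e0 : N + 1 - k = l + 2 := by omega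
          have e1 : N + 1 - (k + 1) = l + 1 := by omega
          have e2 : N + 1 - (k + 2) = l := by omega
          have hl1 : 1 ≤ l := by omega
          simp only [e0, e1, e2]
          have i1 := hUL k
          have i2 := hbL l hl1
          calc (U (k + 1) * b (l + 1)) ^ 2 = U (k + 1) ^ 2 * b (l + 1) ^ 2 := by ring
            _ ≤ (8 * U k * U (k + 2)) * (8 * b l * b (l + 2)) :=
              mul_le_mul i1 i2 (sq_nonneg _) ((sq_nonneg _).trans i1)
            _ = _ := by ring)
      simp only [Nat.add_sub_cancel, Nat.add_sub_cancel_left] at hq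
      have h1 := transport_rhs_bound hu hΦ s (fun x => heq x s hs) N y
      refine h1.trans ?_
      set S := (8 : ℝ) ^ (N ^ 2) * (U 1 * b N + U N * b 1) with hS
      have hS0 : 0 ≤ S := mul_nonneg (by positivity)
        (add_nonneg (mul_nonneg (hU0 1) (hb0 N)) (mul_nonneg (hU0 N) (hb0 1)))
      have h2 : ∑ i ∈ Finset.range N,
          (N.choose i : ℝ) * ‖spD (i + 1) Φ (y, s)‖ * ‖spD (N - i) u (y, s)‖
          ≤ ∑ i ∈ Finset.range N, (N.choose i : ℝ) * S := by
        refine Finset.sum_le_sum fun i hi => ?_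
        rw [Finset.mem_range] at hi
        rw [mul_assoc]
        refine mul_le_mul_of_nonneg_left ?_ (Nat.cast_nonneg _)
        have h3 := hq (N - i) (by omega) (by omega)
        rw [show N + 1 - (N - i) = i + 1 by omega] at h3
        refine le_trans ?_ h3
        rw [mul_comm]
        exact mul_le_mul (hub (N - i) y s hs) (hbdd (i + 1) (by omega) y) (norm_nonneg _) (hU0 _)
      have h4 : ∑ i ∈ Finset.range N, (N.choose i : ℝ) ≤ 2 ^ N := by
        have := Nat.sum_range_choose N
        have h5 : ∑ i ∈ Finset.range (N + 1), (N.choose i : ℝ) = 2 ^ N := by exact_mod_cast this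
        rw [Finset.sum_range_succ] at h5
        have : (0 : ℝ) ≤ (N.choose N : ℝ) := Nat.cast_nonneg _
        linarith
      rw [← Finset.sum_mul] at h2
      have h6 : U 1 * b N + U N * b 1 ≤ U 1 * m + U N * Real.exp (C * U 1 * (s - t₀)) :=
        add_le_add (mul_le_mul_of_nonneg_left hbN (hU0 1)) (mul_le_mul_of_nonneg_left hb1 (hU0 N))
      calc _ ≤ _ := h2
        _ ≤ 2 ^ N * S := mul_le_mul_of_nonneg_right h4 hS0
        _ = C * (U 1 * b N + U N * b 1) := by rw [hS, hC]; ring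
        _ ≤ C * (U 1 * m + U N * Real.exp (C * U 1 * (s - t₀))) :=
          mul_le_mul_of_nonneg_left h6 (by linarith)
        _ = _ := by ring
  refine ciSup_le fun x => (hfin x).trans (le_of_eq ?_)
  rw [hU1]
  simp only [hUdef]
  rw [zero_add, show C * supDNu 1 u t₀ T * (t - t₀) = C * (t - t₀) * supDNu 1 u t₀ T by ring]
  ring
end
end

section
/- There exists a universal constant C with the following property. Fix s ∈ ℝ, λ ≥ 1 and C₀ > 0. Let K : ℝ² → ℝ be a continuously differentiable kernel satisfying ∫_{ℝ²} |x|^a |∇^b K(x)| dx ≤ C₀ λ^{b−a+s} for all integers a, b ∈ {0,1}, and define T_K h(x) = ∫_{ℝ²} K(y) h(x−y) dy. Then for every smooth, 2π-periodic vector field u : ℝ² → ℝ² with div u = 0 and every smooth 2π-periodic function f : ℝ² → ℝ: sup_{x∈ℝ²} | T_K(u·∇f)(x) − u(x)·∇(T_K f)(x) | ≤ C C₀ λ^s ‖∇u‖_{C⁰} ‖f‖_{C⁰}. -/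
noncomputable section

open Real MeasureTheory
open scoped BigOperators

lemma ctc_periodic_bounded {F : Type*} [NormedAddCommGroup F] (h : E2 → F) (hc : Continuous h)
    (hp : ∀ (x : E2) (i : Fin 2), h (x + (2 * π) • EuclideanSpace.single i 1) = h x) :
    ∃ M : ℝ, ∀ x, ‖h x‖ ≤ M := by
  obtain ⟨M, hM⟩ := (isCompact_closedBall (0 : E2) (8 * π)).exists_bound_of_continuousOn
    hc.continuousOn
  refine ⟨M, fun x => ?_⟩
  have P : ∀ i : Fin 2, Function.Periodic h ((2 * π) • EuclideanSpace.single i (1 : ℝ)) :=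
    fun i y => hp y i
  set y : E2 := x - ⌊x 0 / (2 * π)⌋ • ((2 * π) • EuclideanSpace.single (0 : Fin 2) (1 : ℝ))
    - ⌊x 1 / (2 * π)⌋ • ((2 * π) • EuclideanSpace.single (1 : Fin 2) (1 : ℝ)) with hy
  have e : h y = h x := by
    rw [hy, (P 1).sub_zsmul_eq, (P 0).sub_zsmul_eq]
  have key : ∀ t : ℝ, |t - ⌊t / (2 * π)⌋ * (2 * π)| ≤ 2 * π := by
    intro t
    have hpi : (0 : ℝ) < 2 * π := by positivity
    have h1 := Int.floor_le (t / (2 * π))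
    have h2 := Int.lt_floor_add_one (t / (2 * π))
    rw [le_div_iff₀ hpi] at h1
    rw [div_lt_iff₀ hpi] at h2
    rw [abs_le]
    constructor <;> nlinarith
  have c0 : y 0 = x 0 - ⌊x 0 / (2 * π)⌋ * (2 * π) := by
    simp [hy]
  have c1 : y 1 = x 1 - ⌊x 1 / (2 * π)⌋ * (2 * π) := by
    simp [hy]
  rw [← e]
  apply hM
  rw [mem_closedBall_zero_iff, EuclideanSpace.norm_eq, Real.sqrt_le_left (by positivity)]
  simp only [Fin.sum_univ_two, Real.norm_eq_abs]
  have k0 := key (x 0)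
  have k1 := key (x 1)
  rw [← c0] at k0
  rw [← c1] at k1
  nlinarith [abs_nonneg (y 0), abs_nonneg (y 1), Real.pi_pos]

lemma ctc_fderiv_bounded {F : Type*} [NormedAddCommGroup F] [NormedSpace ℝ F] (h : E2 → F)
    (hc : ContDiff ℝ (⊤ : ℕ∞) h)
    (hp : ∀ (x : E2) (i : Fin 2), h (x + (2 * π) • EuclideanSpace.single i 1) = h x) :
    ∃ M : ℝ, ∀ x, ‖fderiv ℝ h x‖ ≤ M := by
  apply ctc_periodic_bounded
  · exact hc.continuous_fderiv (by simp)
  · intro x i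
    rw [← fderiv_comp_add_right]
    congr 1
    funext y
    exact hp y i

lemma ctc_hasFDerivAt_refl {F : Type*} [NormedAddCommGroup F] [NormedSpace ℝ F] (h : E2 → F)
    (hd : Differentiable ℝ h) (x y : E2) :
    HasFDerivAt (fun y => h (x - y)) (-(fderiv ℝ h (x - y))) y := by
  have h1 := ((hd (x - y)).hasFDerivAt).comp y ((hasFDerivAt_id y).const_sub x)
  refine HasFDerivAt.congr_fderiv (f' := _) h1 ?_
  ext v
  simp

/-- Differentiation of the convolution. -/
lemma ctc_conv_deriv (K f : E2 → ℝ) (hK : Integrable K) (hKc : Continuous K)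
    (hf : ContDiff ℝ (⊤ : ℕ∞) f) (Mf Mg : ℝ) (hMf : ∀ z, |f z| ≤ Mf)
    (hMg : ∀ z, ‖fderiv ℝ f z‖ ≤ Mg) (x w : E2) :
    fderiv ℝ (fun z => ∫ y, K y * f (z - y)) x w = ∫ y, K y * fderiv ℝ f (x - y) w := by
  have hd : Differentiable ℝ f := hf.differentiable (by simp)
  have hfc : Continuous (fderiv ℝ f) := hf.continuous_fderiv (by simp)
  have hcont : Continuous f := hf.continuous
  have hint' : Integrable (fun y => K y • fderiv ℝ f (x - y)) := by
    refine (hK.norm.mul_const Mg).mono' (by fun_prop) (.of_forall fun y => ?_)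
    rw [norm_smul]
    exact mul_le_mul_of_nonneg_left (hMg _) (norm_nonneg _)
  have H := hasFDerivAt_integral_of_dominated_of_fderiv_le (μ := (volume : Measure E2)) (𝕜 := ℝ)
    (F := fun z y => K y * f (z - y)) (F' := fun z y => K y • fderiv ℝ f (z - y)) (x₀ := x)
    (bound := fun y => ‖K y‖ * Mg) (s := Set.univ) Filter.univ_mem
    (.of_forall fun z => by fun_prop)
    (hK.mul_bdd (c := Mf) (by fun_prop) (.of_forall fun y => hMf _))
    hint'.aestronglyMeasurable
    (.of_forall fun y z _ => by
      rw [norm_smul]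
      exact mul_le_mul_of_nonneg_left (hMg _) (norm_nonneg _))
    (hK.norm.mul_const Mg)
    (.of_forall fun y z _ => by
      have h1 := (hd (z - y)).hasFDerivAt.comp z ((hasFDerivAt_id z).sub_const y)
      have h2 := h1.const_mul (K y)
      exact h2)
  rw [H.fderiv, ContinuousLinearMap.integral_apply hint']
  rfl

/-- One-direction integration by parts. -/
lemma ctc_parts (K f : E2 → ℝ) (w : E2 → ℝ) (hK : Integrable K) (hKc : ContDiff ℝ 1 K)
    (hK' : Integrable (fun x => ‖fderiv ℝ K x‖))
    (hf : ContDiff ℝ (⊤ : ℕ∞) f) (hw : ContDiff ℝ (⊤ : ℕ∞) w)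
    (Mf Mg Mw Mv : ℝ) (hMf : ∀ z, |f z| ≤ Mf) (hMg : ∀ z, ‖fderiv ℝ f z‖ ≤ Mg)
    (hMw : ∀ z, |w z| ≤ Mw) (hMv : ∀ z, ‖fderiv ℝ w z‖ ≤ Mv) (x e : E2) (he : ‖e‖ ≤ 1) (a : ℝ) :
    Integrable (fun y => K y * (w (x - y) - a) * fderiv ℝ f (x - y) e) ∧
    Integrable (fun y => fderiv ℝ K y e * (w (x - y) - a) * f (x - y)
      - K y * fderiv ℝ w (x - y) e * f (x - y)) ∧
    ∫ y, K y * (w (x - y) - a) * fderiv ℝ f (x - y) e =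
      ∫ y, (fderiv ℝ K y e * (w (x - y) - a) * f (x - y)
        - K y * fderiv ℝ w (x - y) e * f (x - y)) := by
  have hfd : Differentiable ℝ f := hf.differentiable (by simp)
  have hwd : Differentiable ℝ w := hw.differentiable (by simp)
  have hKd : Differentiable ℝ K := hKc.differentiable (by simp)
  have hfc : Continuous (fderiv ℝ f) := hf.continuous_fderiv (by simp)
  have hwc : Continuous (fderiv ℝ w) := hw.continuous_fderiv (by simp)
  have hKcc : Continuous (fderiv ℝ K) := hKc.continuous_fderiv (by simp)
  have hf0 : Continuous f := hf.continuous
  have hw0 : Continuous w := hw.continuous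
  have hK0 : Continuous K := hKc.continuous
  have app : ∀ L : E2 →L[ℝ] ℝ, ‖L e‖ ≤ ‖L‖ := fun L =>
    (L.le_opNorm e).trans (mul_le_of_le_one_right (norm_nonneg _) he)
  have hwb : ∀ z, ‖w z - a‖ ≤ Mw + |a| := fun z =>
    (norm_sub_le _ _).trans (add_le_add (hMw z) le_rfl)
  have hKe : Integrable (fun y => fderiv ℝ K y e) :=
    hK'.mono' (by fun_prop) (.of_forall fun y => app _)
  have hA : Integrable (fun y => K y * (w (x - y) - a)) :=
    hK.mul_bdd (c := Mw + |a|) (by fun_prop) (.of_forall fun y => hwb _)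
  have I1 : Integrable (fun y => K y * (w (x - y) - a) * fderiv ℝ f (x - y) e) :=
    hA.mul_bdd (c := Mg) (by fun_prop) (.of_forall fun y => (app _).trans (hMg _))
  have I0 : Integrable (fun y => K y * (w (x - y) - a) * f (x - y)) :=
    hA.mul_bdd (c := Mf) (by fun_prop) (.of_forall fun y => hMf _)
  have I2 : Integrable (fun y => fderiv ℝ K y e * (w (x - y) - a) * f (x - y)) :=
    (hKe.mul_bdd (c := Mw + |a|) (by fun_prop) (.of_forall fun y => hwb _)).mul_bdd (c := Mf)
      (by fun_prop) (.of_forall fun y => hMf _)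
  have I3 : Integrable (fun y => K y * fderiv ℝ w (x - y) e * f (x - y)) :=
    (hK.mul_bdd (c := Mv) (by fun_prop)
      (.of_forall fun y => (app _).trans (hMv _))).mul_bdd (c := Mf)
      (by fun_prop) (.of_forall fun y => hMf _)
  have I4 := I2.sub I3
  refine ⟨I1, I4, ?_⟩
  have dA : ∀ y, HasFDerivAt (fun y => K y * (w (x - y) - a))
      (K y • (-(fderiv ℝ w (x - y))) + (w (x - y) - a) • fderiv ℝ K y) y := fun y =>
    (hKd y).hasFDerivAt.mul ((ctc_hasFDerivAt_refl w hwd x y).sub_const a)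
  have dg := ctc_hasFDerivAt_refl f hfd x
  have hfA : ∀ y, fderiv ℝ (fun y => K y * (w (x - y) - a)) y e
      = fderiv ℝ K y e * (w (x - y) - a) - K y * fderiv ℝ w (x - y) e := by
    intro y
    rw [(dA y).fderiv]
    simp
    ring
  have hfg : ∀ y, fderiv ℝ (fun y => f (x - y)) y e = - fderiv ℝ f (x - y) e := by
    intro y
    rw [(dg y).fderiv]
    simp
  have H := integral_mul_fderiv_eq_neg_fderiv_mul_of_integrable (𝕜 := ℝ)
    (μ := (volume : Measure E2)) (f := fun y => K y * (w (x - y) - a))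
    (g := fun y => f (x - y)) (v := e)
    (by
      simp only [hfA]
      refine I4.congr (.of_forall fun y => ?_)
      simp only [Pi.sub_apply]
      ring)
    (by
      simp only [hfg]
      refine I1.neg.congr (.of_forall fun y => ?_)
      simp)
    I0 (fun y _ => (dA y).differentiableAt) (fun y _ => (dg y).differentiableAt)
  simp only [hfA, hfg, mul_neg, integral_neg, neg_inj] at H
  rw [H]
  congr 1
  funext y
  ring

lemma ctc_decomp (L : E2 →L[ℝ] ℝ) (v : E2) :
    L v = L (EuclideanSpace.single 0 1) * v 0 + L (EuclideanSpace.single 1 1) * v 1 := by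
  have : v = v 0 • EuclideanSpace.single (0 : Fin 2) (1 : ℝ)
      + v 1 • EuclideanSpace.single (1 : Fin 2) (1 : ℝ) := by
    ext i
    fin_cases i <;> simp
  conv_lhs => rw [this]
  simp only [map_add, map_smul, smul_eq_mul]
  ring

/-- Commutator estimate between `u·∇` and a convolution operator `T_K` of order `s`
localized at length scale `λ⁻¹`:
`‖[u·∇, T_K] f‖_{C⁰} ≤ C C₀ λ^s ‖∇u‖_{C⁰} ‖f‖_{C⁰}` for divergence-free `u`. -/
theorem convolution_transport_commutator :
    ∃ C : ℝ, ∀ (s lam C₀ : ℝ), 1 ≤ lam → 0 < C₀ →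
      ∀ (K : E2 → ℝ) (u : E2 → E2) (f : E2 → ℝ),
      ContDiff ℝ 1 K →
      Integrable K →
      Integrable (fun x => ‖x‖ * |K x|) →
      Integrable (fun x => ‖fderiv ℝ K x‖) →
      Integrable (fun x => ‖x‖ * ‖fderiv ℝ K x‖) →
      (∫ x, |K x|) ≤ C₀ * lam ^ s →
      (∫ x, ‖x‖ * |K x|) ≤ C₀ * lam ^ (s - 1) →
      (∫ x, ‖fderiv ℝ K x‖) ≤ C₀ * lam ^ (s + 1) →
      (∫ x, ‖x‖ * ‖fderiv ℝ K x‖) ≤ C₀ * lam ^ s →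
      ContDiff ℝ (⊤ : ℕ∞) u →
      (∀ (x : E2) (i : Fin 2), u (x + (2 * π) • EuclideanSpace.single i 1) = u x) →
      (∀ x : E2, ∑ j : Fin 2, fderiv ℝ (fun y => u y j) x (EuclideanSpace.single j 1) = 0) →
      ContDiff ℝ (⊤ : ℕ∞) f →
      (∀ (x : E2) (i : Fin 2), f (x + (2 * π) • EuclideanSpace.single i 1) = f x) →
      ∀ x : E2,
        |(∫ y, K y * fderiv ℝ f (x - y) (u (x - y))) -
            fderiv ℝ (fun z => ∫ y, K y * f (z - y)) x (u x)|
          ≤ C * C₀ * lam ^ s * (⨆ z : E2, ‖fderiv ℝ u z‖) * (⨆ z : E2, |f z|) := by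
  refine ⟨1, ?_⟩
  intro s lam C₀ hlam hC₀ K u f hKc hK hK1 hK2 hK3 _ _ _ hb hu hup hdiv hf hfp x
  obtain ⟨Mf, hMf⟩ := ctc_periodic_bounded f hf.continuous hfp
  obtain ⟨Mg, hMg⟩ := ctc_fderiv_bounded f hf hfp
  obtain ⟨Mu, hMu⟩ := ctc_periodic_bounded u hu.continuous hup
  obtain ⟨Mv, hMv⟩ := ctc_fderiv_bounded u hu hup
  have hfd : Differentiable ℝ f := hf.differentiable (by simp)
  have hud : Differentiable ℝ u := hu.differentiable (by simp)
  have hfc : Continuous (fderiv ℝ f) := hf.continuous_fderiv (by simp)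
  have hu0 : Continuous u := hu.continuous
  have hK0 : Continuous K := hKc.continuous
  set S := ⨆ z : E2, ‖fderiv ℝ u z‖ with hS
  set N := ⨆ z : E2, |f z| with hN
  have hSle : ∀ z, ‖fderiv ℝ u z‖ ≤ S := fun z =>
    le_ciSup (f := fun z : E2 => ‖fderiv ℝ u z‖) ⟨Mv, by rintro _ ⟨z, rfl⟩; exact hMv z⟩ z
  have hNle : ∀ z, |f z| ≤ N := fun z =>
    le_ciSup (f := fun z : E2 => |f z|) ⟨Mf, by rintro _ ⟨z, rfl⟩; exact hMf z⟩ z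
  have hS0 : 0 ≤ S := (norm_nonneg _).trans (hSle 0)
  have hN0 : 0 ≤ N := (abs_nonneg _).trans (hNle 0)
  have hlip : ∀ y, ‖u (x - y) - u x‖ ≤ S * ‖y‖ := by
    intro y
    have := convex_univ.norm_image_sub_le_of_norm_fderiv_le (𝕜 := ℝ) (f := u) (C := S)
      (x := x) (y := x - y) (fun z _ => hud z) (fun z _ => hSle z) trivial trivial
    simpa using this
  have huj : ∀ j : Fin 2, ContDiff ℝ (⊤ : ℕ∞) (fun y => u y j) := fun j =>
    (contDiff_euclidean.1 hu) j
  have hujp : ∀ (j : Fin 2) (x : E2) (i : Fin 2),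
      (fun y => u y j) (x + (2 * π) • EuclideanSpace.single i 1) = (fun y => u y j) x := by
    intro j x i
    simp only [hup]
  choose Mw hMw using fun j => ctc_periodic_bounded _ (huj j).continuous (hujp j)
  choose Mz hMz using fun j => ctc_fderiv_bounded _ (huj j) (hujp j)
  have parts := fun j : Fin 2 => 
    ctc_parts K f (fun y => u y j) hK hKc hK2 hf (huj j) Mf Mg (Mw j) (Mz j) hMf hMg (hMw j)
      (hMz j) x (EuclideanSpace.single j 1) (by simp) (u x j)
  obtain ⟨a1, a2, a3⟩ := parts 0
  obtain ⟨b1, b2, b3⟩ := parts 1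
  rw [ctc_conv_deriv K f hK hK0 hf Mf Mg hMf hMg x (u x)]
  have J1 : Integrable (fun y => K y * fderiv ℝ f (x - y) (u (x - y))) := by
    refine hK.mul_bdd (c := Mg * Mu) (Continuous.aestronglyMeasurable ?_)
      (.of_forall fun y => ?_)
    · exact (hfc.comp (continuous_const.sub continuous_id)).clm_apply
        (hu0.comp (continuous_const.sub continuous_id))
    · exact (ContinuousLinearMap.le_opNorm _ _).trans
        (mul_le_mul (hMg _) (hMu _) (norm_nonneg _) ((norm_nonneg _).trans (hMg 0)))
  have J2 : Integrable (fun y => K y * fderiv ℝ f (x - y) (u x)) := by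
    refine hK.mul_bdd (c := Mg * Mu) (Continuous.aestronglyMeasurable ?_)
      (.of_forall fun y => ?_)
    · exact (hfc.comp (continuous_const.sub continuous_id)).clm_apply continuous_const
    · exact (ContinuousLinearMap.le_opNorm _ _).trans
        (mul_le_mul (hMg _) (hMu _) (norm_nonneg _) ((norm_nonneg _).trans (hMg 0)))
  have main : (∫ y, K y * fderiv ℝ f (x - y) (u (x - y))) - ∫ y, K y * fderiv ℝ f (x - y) (u x)
      = ∫ y, fderiv ℝ K y (u (x - y) - u x) * f (x - y) := by
    rw [← integral_sub J1 J2]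
    have e1 : ∀ y, K y * fderiv ℝ f (x - y) (u (x - y)) - K y * fderiv ℝ f (x - y) (u x)
        = K y * (u (x - y) 0 - u x 0) * fderiv ℝ f (x - y) (EuclideanSpace.single 0 1)
        + K y * (u (x - y) 1 - u x 1) * fderiv ℝ f (x - y) (EuclideanSpace.single 1 1) := by
      intro y
      rw [ctc_decomp _ (u (x - y)), ctc_decomp _ (u x)]
      ring
    simp only [e1]
    rw [integral_add a1 b1, a3, b3, ← integral_add a2 b2]
    congr 1
    funext y
    have hd := hdiv (x - y)
    rw [Fin.sum_univ_two] at hd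
    rw [ctc_decomp _ (u (x - y) - u x)]
    simp only [PiLp.sub_apply]
    linear_combination (-(K y * f (x - y))) * hd
  rw [main]
  calc |∫ y, fderiv ℝ K y (u (x - y) - u x) * f (x - y)|
      ≤ ∫ y, (‖y‖ * ‖fderiv ℝ K y‖) * (S * N) := by
        rw [← Real.norm_eq_abs]
        refine norm_integral_le_of_norm_le (hK3.mul_const _) (.of_forall fun y => ?_)
        rw [norm_mul]
        have h1 : ‖fderiv ℝ K y (u (x - y) - u x)‖ ≤ ‖fderiv ℝ K y‖ * (S * ‖y‖) :=
          (ContinuousLinearMap.le_opNorm _ _).trans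
            (mul_le_mul_of_nonneg_left (hlip y) (norm_nonneg _))
        calc _ ≤ ‖fderiv ℝ K y‖ * (S * ‖y‖) * N :=
              mul_le_mul h1 (hNle _) (abs_nonneg _) (by positivity)
          _ = _ := by ring
    _ = (∫ y, ‖y‖ * ‖fderiv ℝ K y‖) * (S * N) := integral_mul_const _ _
    _ ≤ (C₀ * lam ^ s) * (S * N) := mul_le_mul_of_nonneg_right hb (by positivity)
    _ = 1 * C₀ * lam ^ s * S * N := by ring
end
end

section
/- There exists a universal constant C with the following property. Fix s ∈ ℝ, λ ≥ 1 and C₀ > 0. Let K : ℝ² → ℝ be a continuously differentiable kernel satisfying ∫_{ℝ²} |x|^a |∇^b K(x)| dx ≤ C₀ λ^{b−a+s} for all integers a, b ∈ {0,1}, and define T_K to act on functions of space by T_K h(x) = ∫_{ℝ²} K(y) h(x−y) dy. Let u : ℝ² × ℝ → ℝ² be a smooth vector field, 2π-periodic in space, with div u(·,t) = 0 for all t, let D_t = ∂_t + u·∇ denote the material derivative, and let f : ℝ² × ℝ → ℝ be smooth and 2π-periodic in space. Then for every time t: sup_{x∈ℝ²} | D_t (T_K f)(x,t) − T_K (D_t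 f)(x,t) | ≤ C C₀ λ^s ‖∇u(·,t)‖_{C⁰} ‖f(·,t)‖_{C⁰}. -/
noncomputable section
open Real MeasureTheory
open scoped BigOperators

lemma periodic_bdd {F : Type*} [NormedAddCommGroup F] (φ : E2 × ℝ → F) (hc : Continuous φ)
    (hp : ∀ (x : E2) (t : ℝ) (i : Fin 2),
        φ (x + (2 * π) • EuclideanSpace.single i 1, t) = φ (x, t)) (t : ℝ) :
    ∃ C : ℝ, 0 ≤ C ∧ ∀ z : E2, ∀ τ ∈ Metric.ball t 1, ‖φ (z, τ)‖ ≤ C := by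
  obtain ⟨C, hC⟩ := ((isCompact_closedBall (0 : E2) (4 * π)).prod
    (isCompact_closedBall t 1)).exists_bound_of_continuousOn hc.continuousOn
  refine ⟨C, ?_, ?_⟩
  · refine (norm_nonneg _).trans (hC (0, t) ⟨?_, ?_⟩) <;> simp; positivity
  intro z τ hτ
  have hper : ∀ i : Fin 2, Function.Periodic (fun z => φ (z, τ))
      ((2 * π) • EuclideanSpace.single i (1 : ℝ) : E2) := fun i x => hp x τ i
  have hz := ((hper 0).zsmul (-⌊z 0 / (2 * π)⌋)) z
  have hz2 := ((hper 1).zsmul (-⌊z 1 / (2 * π)⌋))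
    (z + (-⌊z 0 / (2 * π)⌋) • ((2 * π) • EuclideanSpace.single 0 (1 : ℝ) : E2))
  simp only at hz hz2
  rw [← hz, ← hz2]
  apply hC
  refine ⟨?_, Metric.ball_subset_closedBall hτ⟩
  have key : ∀ r : ℝ, |r - ⌊r / (2 * π)⌋ * (2 * π)| ≤ 2 * π := by
    intro r
    have hpi : 0 < 2 * π := by positivity
    have h1 := Int.floor_le (r / (2 * π))
    have h2 := (Int.lt_floor_add_one (r / (2 * π))).le
    rw [le_div_iff₀ hpi] at h1
    rw [div_le_iff₀ hpi] at h2
    rw [abs_le]; constructor <;> nlinarith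
  rw [mem_closedBall_zero_iff, EuclideanSpace.norm_eq]
  apply Real.sqrt_le_iff.2
  refine ⟨by positivity, ?_⟩
  have k0 := key (z 0)
  have k1 := key (z 1)
  have a0 := pow_le_pow_left₀ (abs_nonneg _) k0 2
  have a1 := pow_le_pow_left₀ (abs_nonneg _) k1 2
  rw [sq_abs] at a0 a1
  simp [Fin.sum_univ_two]
  rw [← sub_eq_add_neg, ← sub_eq_add_neg]
  nlinarith [sq_nonneg π]

lemma fderiv_periodic {F : Type*} [NormedAddCommGroup F] [NormedSpace ℝ F] (φ : E2 × ℝ → F)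
    (hp : ∀ (x : E2) (t : ℝ) (i : Fin 2),
        φ (x + (2 * π) • EuclideanSpace.single i 1, t) = φ (x, t)) (x : E2) (t : ℝ) (i : Fin 2) :
    fderiv ℝ φ (x + (2 * π) • EuclideanSpace.single i 1, t) = fderiv ℝ φ (x, t) := by
  have h := fderiv_comp_add_right (𝕜 := ℝ) (f := φ) (x := (x, t))
    (((2 * π) • EuclideanSpace.single i 1, 0) : E2 × ℝ)
  have e : (fun p : E2 × ℝ => φ (p + (((2 * π) • EuclideanSpace.single i 1, 0) : E2 × ℝ))) = φ := by
    funext p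
    obtain ⟨a, b⟩ := p
    simpa using hp a b i
  rw [e] at h
  simpa using h.symm

lemma clm_sum (L : E2 →L[ℝ] ℝ) (w : E2) :
    L w = ∑ j : Fin 2, L (EuclideanSpace.single j 1) * w j := by
  have h : w = ∑ j : Fin 2, w j • (EuclideanSpace.single j (1 : ℝ) : E2) := by
    ext i
    fin_cases i <;> simp [Fin.sum_univ_two]
  conv_lhs => rw [h]
  rw [map_sum]
  simp [mul_comm]

lemma ibp (K G : E2 → ℝ) (w : E2 → E2) (A B A' B' : ℝ)
    (hK : ContDiff ℝ 1 K) (hKi : Integrable K)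
    (hDK : Integrable (fun x => ‖fderiv ℝ K x‖))
    (hG : ContDiff ℝ 1 G) (hw : ContDiff ℝ 1 w)
    (hdiv : ∀ x, ∑ j : Fin 2, fderiv ℝ (fun y => w y j) x (EuclideanSpace.single j 1) = 0)
    (hGA : ∀ z, |G z| ≤ A) (hGA' : ∀ z, ‖fderiv ℝ G z‖ ≤ A')
    (hwB : ∀ z, ‖w z‖ ≤ B) (hwB' : ∀ z, ‖fderiv ℝ w z‖ ≤ B') :
    ∫ y, K y * fderiv ℝ G y (w y) = - ∫ y, fderiv ℝ K y (w y) * G y := by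
  have hA : 0 ≤ A := (abs_nonneg _).trans (hGA 0)
  have hA' : 0 ≤ A' := (norm_nonneg _).trans (hGA' 0)
  have hB : 0 ≤ B := (norm_nonneg _).trans (hwB 0)
  have hB' : 0 ≤ B' := (norm_nonneg _).trans (hwB' 0)
  have hwj : ∀ j, ContDiff ℝ 1 (fun y => w y j) := fun j => (contDiff_euclidean.1 hw) j
  have hwjB : ∀ j z, |w z j| ≤ B := fun j z => by
    have := PiLp.norm_apply_le (w z) j
    rw [Real.norm_eq_abs] at this
    exact this.trans (hwB z)
  have hone : ∀ j : Fin 2, ‖(EuclideanSpace.single j (1 : ℝ) : E2)‖ = 1 := by intro j; simp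
  have hle : ∀ (L : E2 →L[ℝ] ℝ) (j : Fin 2), |L (EuclideanSpace.single j 1)| ≤ ‖L‖ := by
    intro L j
    have := L.le_opNorm (EuclideanSpace.single j 1)
    rwa [hone, mul_one, Real.norm_eq_abs] at this
  have hdw : ∀ j y e, fderiv ℝ (fun y => w y j) y e = fderiv ℝ w y e j := by
    intro j y e
    have h1 : HasFDerivAt w (fderiv ℝ w y) y := (hw.differentiable one_ne_zero y).hasFDerivAt
    have h2 : HasFDerivAt (fun y => w y j)
        ((EuclideanSpace.proj j : E2 →L[ℝ] ℝ).comp (fderiv ℝ w y)) y :=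
      HasFDerivAt.comp y (EuclideanSpace.proj j : E2 →L[ℝ] ℝ).hasFDerivAt h1
    rw [h2.fderiv]; rfl
  have hdwB : ∀ j y, |fderiv ℝ (fun y => w y j) y (EuclideanSpace.single j 1)| ≤ B' := by
    intro j y
    rw [hdw]
    have h1 := PiLp.norm_apply_le (fderiv ℝ w y (EuclideanSpace.single j 1)) j
    have h2 := (fderiv ℝ w y).le_opNorm (EuclideanSpace.single j 1)
    rw [hone, mul_one] at h2
    rw [Real.norm_eq_abs] at h1
    exact h1.trans (h2.trans (hwB' y))
  have hcDK : ∀ e, Continuous (fun y => fderiv ℝ K y e) := fun e =>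
    (hK.continuous_fderiv one_ne_zero).clm_apply continuous_const
  have hcDG : ∀ e, Continuous (fun y => fderiv ℝ G y e) := fun e =>
    (hG.continuous_fderiv one_ne_zero).clm_apply continuous_const
  have hcDw : ∀ j e, Continuous (fun y => fderiv ℝ (fun y => w y j) y e) := fun j e =>
    ((hwj j).continuous_fderiv one_ne_zero).clm_apply continuous_const
  have hcK := hK.continuous
  have hcG := hG.continuous
  have hcw := fun j => (hwj j).continuous
  have hdP : ∀ j y, fderiv ℝ (fun y => K y * w y j) y (EuclideanSpace.single j 1)
      = fderiv ℝ K y (EuclideanSpace.single j 1) * w y j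
        + K y * fderiv ℝ (fun y => w y j) y (EuclideanSpace.single j 1) := by
    intro j y
    rw [fderiv_fun_mul (hK.differentiable one_ne_zero y) ((hwj j).differentiable one_ne_zero y)]
    simp; ring
  have hI1 : ∀ j : Fin 2, Integrable (fun y =>
      (fderiv ℝ (fun y => K y * w y j) y (EuclideanSpace.single j 1)) * G y) := by
    intro j
    have hint : Integrable (fun y => ‖fderiv ℝ K y‖ * (B * A) + |K y| * (B' * A)) :=
      (hDK.mul_const _).add (hKi.abs.mul_const _)
    refine hint.mono' ?_ (Filter.Eventually.of_forall fun y => ?_)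
    · simp_rw [hdP]
      exact ((((hcDK _).mul (hcw j)).add (hcK.mul (hcDw j _))).mul hcG).aestronglyMeasurable
    · rw [hdP, Real.norm_eq_abs, abs_mul]
      have t1 : |fderiv ℝ K y (EuclideanSpace.single j 1) * w y j
        + K y * fderiv ℝ (fun y => w y j) y (EuclideanSpace.single j 1)|
          ≤ ‖fderiv ℝ K y‖ * B + |K y| * B' := by
        refine (abs_add_le _ _).trans ?_
        rw [abs_mul, abs_mul]
        gcongr
        · exact hle _ j
        · exact hwjB j y
        · exact hdwB j y
      calc _ ≤ (‖fderiv ℝ K y‖ * B + |K y| * B') * A := by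
            gcongr
            exact hGA y
        _ = _ := by ring
  have hI2 : ∀ j : Fin 2, Integrable (fun y =>
      (K y * w y j) * fderiv ℝ G y (EuclideanSpace.single j 1)) := by
    intro j
    refine (hKi.abs.mul_const (B * A')).mono' ?_ (Filter.Eventually.of_forall fun y => ?_)
    · exact ((hcK.mul (hcw j)).mul (hcDG _)).aestronglyMeasurable
    · rw [Real.norm_eq_abs, abs_mul, abs_mul, mul_assoc]
      gcongr
      · exact hwjB j y
      · exact (hle _ j).trans (hGA' y)
  have hI3 : ∀ j : Fin 2, Integrable (fun y => (K y * w y j) * G y) := by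
    intro j
    refine (hKi.abs.mul_const (B * A)).mono' ?_ (Filter.Eventually.of_forall fun y => ?_)
    · exact ((hcK.mul (hcw j)).mul hcG).aestronglyMeasurable
    · rw [Real.norm_eq_abs, abs_mul, abs_mul, mul_assoc]
      gcongr
      · exact hwjB j y
      · exact hGA y
  have hmain := fun j => integral_mul_fderiv_eq_neg_fderiv_mul_of_integrable (hI1 j) (hI2 j) (hI3 j)
    (fun y _ => (hK.differentiable one_ne_zero y).mul ((hwj j).differentiable one_ne_zero y))
    (fun y _ => hG.differentiable one_ne_zero y)
  calc ∫ y, K y * fderiv ℝ G y (w y)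
      = ∫ y, ∑ j : Fin 2, (K y * w y j) * fderiv ℝ G y (EuclideanSpace.single j 1) := by
        congr 1; funext y
        rw [clm_sum, Finset.mul_sum]
        exact Finset.sum_congr rfl fun j _ => by ring
    _ = ∑ j : Fin 2, ∫ y, (K y * w y j) * fderiv ℝ G y (EuclideanSpace.single j 1) :=
        integral_finsetSum _ fun j _ => hI2 j
    _ = - ∑ j : Fin 2, ∫ y,
          (fderiv ℝ (fun y => K y * w y j) y (EuclideanSpace.single j 1)) * G y := by
        rw [← Finset.sum_neg_distrib]
        exact Finset.sum_congr rfl fun j _ => hmain j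
    _ = - ∫ y, ∑ j : Fin 2,
          (fderiv ℝ (fun y => K y * w y j) y (EuclideanSpace.single j 1)) * G y := by
        rw [integral_finsetSum _ fun j _ => hI1 j]
    _ = _ := by
        congr 2; funext y
        rw [← Finset.sum_mul, clm_sum]
        simp_rw [hdP]
        rw [Finset.sum_add_distrib, ← Finset.mul_sum, hdiv, mul_zero, add_zero]

lemma fderiv_sub_left {F : Type*} [NormedAddCommGroup F] [NormedSpace ℝ F] (g : E2 → F)
    (hg : ContDiff ℝ 1 g) (x y : E2) :
    fderiv ℝ (fun y => g (x - y)) y = - fderiv ℝ g (x - y) := by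
  have h1 : HasFDerivAt g (fderiv ℝ g (x - y)) (x - y) :=
    (hg.differentiable one_ne_zero _).hasFDerivAt
  have h2 : HasFDerivAt (fun y : E2 => x - y) (-ContinuousLinearMap.id ℝ E2) y :=
    (hasFDerivAt_id y).const_sub x
  have h3 : HasFDerivAt (fun y => g (x - y)) _ y := HasFDerivAt.comp y h1 h2
  rw [h3.fderiv]
  ext e
  simp

/-- Static version: integration by parts. -/
lemma static_commutator (K g : E2 → ℝ) (v : E2 → E2) (x : E2) (A B A' B' : ℝ)
    (hK : ContDiff ℝ 1 K) (hKi : Integrable K)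
    (hDK : Integrable (fun x => ‖fderiv ℝ K x‖))
    (hxDK : Integrable (fun x => ‖x‖ * ‖fderiv ℝ K x‖))
    (hg : ContDiff ℝ 1 g) (hv : ContDiff ℝ 1 v)
    (hdiv : ∀ x, ∑ j : Fin 2, fderiv ℝ (fun y => v y j) x (EuclideanSpace.single j 1) = 0)
    (hgA : ∀ z, |g z| ≤ A) (hgA' : ∀ z, ‖fderiv ℝ g z‖ ≤ A')
    (hvB : ∀ z, ‖v z‖ ≤ B) (hvB' : ∀ z, ‖fderiv ℝ v z‖ ≤ B') :
    |∫ y, K y * fderiv ℝ g (x - y) (v x - v (x - y))| ≤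
      B' * A * ∫ x, ‖x‖ * ‖fderiv ℝ K x‖ := by
  have hB' : 0 ≤ B' := (norm_nonneg _).trans (hvB' 0)
  have hsub : ContDiff ℝ 1 (fun y : E2 => x - y) := contDiff_const.sub contDiff_id
  have hG : ContDiff ℝ 1 (fun y => g (x - y)) := hg.comp hsub
  have hw : ContDiff ℝ 1 (fun y => v x - v (x - y)) := contDiff_const.sub (hv.comp hsub)
  have hdG : ∀ y, fderiv ℝ (fun y => g (x - y)) y = - fderiv ℝ g (x - y) := fun y =>
    fderiv_sub_left g hg x y
  have hdw : ∀ y, fderiv ℝ (fun y => v x - v (x - y)) y = fderiv ℝ v (x - y) := fun y => by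
    rw [fderiv_const_sub, fderiv_sub_left v hv, neg_neg]
  have hlip : ∀ y, ‖v x - v (x - y)‖ ≤ B' * ‖y‖ := fun y => by
    have := convex_univ.norm_image_sub_le_of_norm_fderiv_le (𝕜 := ℝ) (f := v) (C := B')
      (fun z _ => hv.differentiable one_ne_zero z) (fun z _ => hvB' z)
      (Set.mem_univ (x - y)) (Set.mem_univ x)
    simpa using this
  have h := ibp K (fun y => g (x - y)) (fun y => v x - v (x - y)) A (B + B) A' B' hK hKi hDK hG hw
    (fun y => by
      rw [← hdiv (x - y)]
      refine Finset.sum_congr rfl fun j _ => ?_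
      have : (fun y => (v x - v (x - y)) j) = fun y => v x j - (fun z => v z j) (x - y) := by
        funext y; simp
      rw [this, fderiv_const_sub, fderiv_sub_left _ ((contDiff_euclidean.1 hv) j), neg_neg])
    (fun z => hgA _) (fun z => by rw [hdG, norm_neg]; exact hgA' _)
    (fun z => (norm_sub_le _ _).trans (add_le_add (hvB _) (hvB _)))
    (fun z => by rw [hdw]; exact hvB' _)
  have h2 : ∫ y, K y * fderiv ℝ g (x - y) (v x - v (x - y)) =
      ∫ y, fderiv ℝ K y (v x - v (x - y)) * g (x - y) := by
    rw [← neg_inj, ← h, ← integral_neg]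
    congr 1; funext y
    rw [hdG]; simp; ring
  rw [h2, ← integral_const_mul, ← Real.norm_eq_abs]
  refine norm_integral_le_of_norm_le (hxDK.const_mul _) (Filter.Eventually.of_forall fun y => ?_)
  rw [norm_mul, Real.norm_eq_abs (g _)]
  calc _ ≤ (‖fderiv ℝ K y‖ * (B' * ‖y‖)) * A := by
        gcongr
        · exact ((fderiv ℝ K y).le_opNorm _).trans (by gcongr; exact hlip y)
        · exact hgA _
    _ = _ := by ring

/-- Commutator estimate between the material derivative `D_t = ∂ₜ + u·∇` and a spatial
convolution operator `T_K` of order `s` localized at length scale `λ⁻¹`: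
`‖[D_t, T_K] f(·,t)‖_{C⁰} ≤ C C₀ λ^s ‖∇u(·,t)‖_{C⁰} ‖f(·,t)‖_{C⁰}` for divergence-free `u`. -/
theorem material_derivative_convolution_commutator :
    ∃ C : ℝ, ∀ (s lam C₀ : ℝ), 1 ≤ lam → 0 < C₀ →
      ∀ (K : E2 → ℝ) (u : E2 × ℝ → E2) (f : E2 × ℝ → ℝ),
      ContDiff ℝ 1 K →
      Integrable K →
      Integrable (fun x => ‖x‖ * |K x|) →
      Integrable (fun x => ‖fderiv ℝ K x‖) →
      Integrable (fun x => ‖x‖ * ‖fderiv ℝ K x‖) →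
      (∫ x, |K x|) ≤ C₀ * lam ^ s →
      (∫ x, ‖x‖ * |K x|) ≤ C₀ * lam ^ (s - 1) →
      (∫ x, ‖fderiv ℝ K x‖) ≤ C₀ * lam ^ (s + 1) →
      (∫ x, ‖x‖ * ‖fderiv ℝ K x‖) ≤ C₀ * lam ^ s →
      ContDiff ℝ (⊤ : ℕ∞) u →
      (∀ (x : E2) (t : ℝ) (i : Fin 2),
        u (x + (2 * π) • EuclideanSpace.single i 1, t) = u (x, t)) →
      (∀ (x : E2) (t : ℝ),
        ∑ j : Fin 2, fderiv ℝ (fun y => u (y, t) j) x (EuclideanSpace.single j 1) = 0) →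
      ContDiff ℝ (⊤ : ℕ∞) f →
      (∀ (x : E2) (t : ℝ) (i : Fin 2),
        f (x + (2 * π) • EuclideanSpace.single i 1, t) = f (x, t)) →
      ∀ (t : ℝ) (x : E2),
        |(deriv (fun τ => ∫ y, K y * f (x - y, τ)) t
            + fderiv ℝ (fun z => ∫ y, K y * f (z - y, t)) x (u (x, t)))
          - ∫ y, K y * (deriv (fun τ => f (x - y, τ)) t
              + fderiv ℝ (fun z => f (z, t)) (x - y) (u (x - y, t)))|
          ≤ C * C₀ * lam ^ s * (⨆ z : E2, ‖fderiv ℝ (fun w => u (w, t)) z‖)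
              * (⨆ z : E2, |f (z, t)|) := by
  refine ⟨1, ?_⟩
  intro s lam C₀ hlam hC₀ K u f hK hKi hxK hDK hxDK _ _ _ hbd hu hup hdiv hf hfp t x
  obtain ⟨A₀, -, hA₀⟩ := periodic_bdd f hf.continuous hfp t
  have hf1 : ContDiff ℝ 1 f := hf.of_le (by exact_mod_cast le_top)
  have hu1 : ContDiff ℝ 1 u := hu.of_le (by exact_mod_cast le_top)
  have hcDf := hf1.continuous_fderiv one_ne_zero
  have hcDu := hu1.continuous_fderiv one_ne_zero
  obtain ⟨A₁, hA₁0, hA₁⟩ := periodic_bdd (fderiv ℝ f) hcDf (fderiv_periodic f hfp) t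
  obtain ⟨B₀, hB₀0, hB₀⟩ := periodic_bdd u hu.continuous hup t
  obtain ⟨B₁, -, hB₁⟩ := periodic_bdd (fderiv ℝ u) hcDu (fderiv_periodic u hup) t
  have htb : t ∈ Metric.ball t 1 := Metric.mem_ball_self one_pos
  have hmk : ∀ τ : ℝ, ContDiff ℝ 1 (fun z : E2 => (z, τ)) := fun τ => contDiff_id.prodMk contDiff_const
  have hg : ∀ τ, ContDiff ℝ 1 (fun z => f (z, τ)) := fun τ => hf1.comp (hmk τ)
  have hv : ContDiff ℝ 1 (fun z => u (z, t)) := hu1.comp (hmk t)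
  have hinl : ‖ContinuousLinearMap.inl ℝ E2 ℝ‖ ≤ 1 := ContinuousLinearMap.norm_inl_le_one ℝ E2 ℝ
  have hmkd : ∀ (z : E2) (τ : ℝ), HasFDerivAt (fun z : E2 => (z, τ))
      (ContinuousLinearMap.inl ℝ E2 ℝ) z := fun z τ => hasFDerivAt_prodMk_left z τ
  have hfz : ∀ z, HasFDerivAt (fun z => f (z, t))
      ((fderiv ℝ f (z, t)).comp (ContinuousLinearMap.inl ℝ E2 ℝ)) z := fun z =>
    HasFDerivAt.comp z (hf1.differentiable one_ne_zero (z, t)).hasFDerivAt (hmkd z t)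
  have huz : ∀ z, HasFDerivAt (fun z => u (z, t))
      ((fderiv ℝ u (z, t)).comp (ContinuousLinearMap.inl ℝ E2 ℝ)) z := fun z =>
    HasFDerivAt.comp z (hu1.differentiable one_ne_zero (z, t)).hasFDerivAt (hmkd z t)
  have hft : ∀ z τ, HasDerivAt (fun τ => f (z, τ)) (fderiv ℝ f (z, τ) (0, 1)) τ := fun z τ =>
    HasFDerivAt.comp_hasDerivAt (l := f) (f := fun τ : ℝ => (z, τ)) τ
      (hf1.differentiable one_ne_zero (z, τ)).hasFDerivAt
      ((hasDerivAt_const τ z).prodMk (hasDerivAt_id τ))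
  have hgA' : ∀ z, ‖fderiv ℝ (fun z => f (z, t)) z‖ ≤ A₁ := fun z => by
    rw [(hfz z).fderiv]
    refine (ContinuousLinearMap.opNorm_comp_le _ _).trans ?_
    exact (mul_le_of_le_one_right (norm_nonneg _) hinl).trans (hA₁ z t htb)
  have hvB' : ∀ z, ‖fderiv ℝ (fun z => u (z, t)) z‖ ≤ B₁ := fun z => by
    rw [(huz z).fderiv]
    refine (ContinuousLinearMap.opNorm_comp_le _ _).trans ?_
    exact (mul_le_of_le_one_right (norm_nonneg _) hinl).trans (hB₁ z t htb)
  have hftB : ∀ z, ∀ τ ∈ Metric.ball t 1, |fderiv ℝ f (z, τ) (0, 1)| ≤ A₁ := fun z τ hτ => by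
    have h1 := (fderiv ℝ f (z, τ)).le_opNorm (0, 1)
    have h2 : ‖((0, 1) : E2 × ℝ)‖ = 1 := by simp [Prod.norm_def]
    rw [h2, mul_one] at h1
    exact h1.trans (hA₁ z τ hτ)
  have hcK := hK.continuous
  have hKint : ∀ τ ∈ Metric.ball t 1, ∀ z : E2, Integrable (fun y => K y * f (z - y, τ)) := by
    intro τ hτ z
    refine (hKi.abs.mul_const A₀).mono' ?_ (Filter.Eventually.of_forall fun y => ?_)
    · exact (hcK.mul ((hg τ).continuous.comp (continuous_const.sub continuous_id))).aestronglyMeasurable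
    · rw [norm_mul, Real.norm_eq_abs (K y)]
      gcongr
      exact hA₀ _ τ hτ
  -- time derivative
  have hT := hasDerivAt_integral_of_dominated_loc_of_deriv_le (μ := (volume : Measure E2))
    (F := fun τ y => K y * f (x - y, τ)) (F' := fun τ y => K y * fderiv ℝ f (x - y, τ) (0, 1))
    (x₀ := t) (s := Metric.ball t 1) (bound := fun y => |K y| * A₁) (Metric.ball_mem_nhds t one_pos)
    (Filter.eventually_of_mem (Metric.ball_mem_nhds t one_pos)
      fun τ hτ => (hKint τ hτ x).aestronglyMeasurable)
    (hKint t htb x)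
    (hcK.mul ((hcDf.comp ((continuous_const.sub continuous_id).prodMk continuous_const)).clm_apply
      continuous_const)).aestronglyMeasurable
    (Filter.Eventually.of_forall fun y τ hτ => by
      rw [norm_mul, Real.norm_eq_abs (K y)]
      gcongr
      exact hftB _ τ hτ)
    (hKi.abs.mul_const _)
    (Filter.Eventually.of_forall fun y τ hτ => (hft _ τ).const_mul _)
  -- space derivative
  have hcDg : Continuous (fun z => fderiv ℝ (fun z => f (z, t)) z) :=
    (hg t).continuous_fderiv one_ne_zero
  have hcsub : Continuous (fun y : E2 => x - y) := continuous_const.sub continuous_id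
  have hSint : Integrable (fun y => K y • fderiv ℝ (fun z => f (z, t)) (x - y)) := by
    refine (hKi.abs.mul_const A₁).mono' ?_ (Filter.Eventually.of_forall fun y => ?_)
    · exact (hcK.smul (hcDg.comp hcsub)).aestronglyMeasurable
    · rw [norm_smul, Real.norm_eq_abs (K y)]
      gcongr
      exact hgA' _
  have hS := hasFDerivAt_integral_of_dominated_of_fderiv_le (𝕜 := ℝ) (μ := (volume : Measure E2))
    (F := fun z y => K y * f (z - y, t))
    (F' := fun z y => K y • fderiv ℝ (fun z => f (z, t)) (z - y))
    (x₀ := x) (s := Set.univ) (bound := fun y => |K y| * A₁) Filter.univ_mem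
    (Filter.Eventually.of_forall fun z => (hKint t htb z).aestronglyMeasurable)
    (hKint t htb x) hSint.aestronglyMeasurable
    (Filter.Eventually.of_forall fun y z _ => by
      rw [norm_smul, Real.norm_eq_abs (K y)]
      gcongr
      exact hgA' _)
    (hKi.abs.mul_const _)
    (Filter.Eventually.of_forall fun y z _ => by
      have h1 : HasFDerivAt (fun z => f (z, t)) (fderiv ℝ (fun z => f (z, t)) (z - y)) (z - y) :=
        ((hg t).differentiable one_ne_zero _).hasFDerivAt
      have h2 : HasFDerivAt (fun z : E2 => z - y) (ContinuousLinearMap.id ℝ E2) z :=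
        (hasFDerivAt_id z).sub_const y
      exact (HasFDerivAt.comp z h1 h2).const_mul (K y))
  rw [hT.2.deriv, hS.fderiv, ContinuousLinearMap.integral_apply hSint]
  have hI2 : Integrable (fun y => (K y • fderiv ℝ (fun z => f (z, t)) (x - y)) (u (x, t))) :=
    hSint.apply_continuousLinearMap _
  have hI3 : Integrable (fun y => K y * (fderiv ℝ (fun z => f (z, t)) (x - y) (u (x - y, t)))) := by
    refine (hKi.abs.mul_const (A₁ * B₀)).mono' ?_ (Filter.Eventually.of_forall fun y => ?_)
    · exact (hcK.mul ((hcDg.comp hcsub).clm_apply (hv.continuous.comp hcsub))).aestronglyMeasurable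
    · rw [norm_mul, Real.norm_eq_abs (K y)]
      gcongr
      refine (ContinuousLinearMap.le_opNorm _ _).trans ?_
      gcongr
      · exact hgA' _
      · exact hB₀ _ t htb
  have hI4 : Integrable (fun y => K y * (deriv (fun τ => f (x - y, τ)) t
      + fderiv ℝ (fun z => f (z, t)) (x - y) (u (x - y, t)))) := by
    refine (hT.1.add hI3).congr (Filter.Eventually.of_forall fun y => ?_)
    simp only [Pi.add_apply]
    rw [(hft (x - y) t).deriv, mul_add]
  have heq : (∫ y, K y * fderiv ℝ f (x - y, t) (0, 1))
      + (∫ y, (K y • fderiv ℝ (fun z => f (z, t)) (x - y)) (u (x, t)))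
      - ∫ y, K y * (deriv (fun τ => f (x - y, τ)) t
          + fderiv ℝ (fun z => f (z, t)) (x - y) (u (x - y, t)))
      = ∫ y, K y * fderiv ℝ (fun z => f (z, t)) (x - y) (u (x, t) - u (x - y, t)) := by
    rw [← integral_add hT.1 hI2]
    refine (integral_sub (hT.1.add hI2) hI4).symm.trans ?_
    congr 1; funext y
    simp only [(hft (x - y) t).deriv, Pi.add_apply, ContinuousLinearMap.smul_apply, smul_eq_mul, map_sub]
    ring
  rw [heq]
  have hbF : BddAbove (Set.range fun z : E2 => |f (z, t)|) :=
    ⟨A₀, by rintro _ ⟨z, rfl⟩; exact hA₀ z t htb⟩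
  have hbU : BddAbove (Set.range fun z : E2 => ‖fderiv ℝ (fun w => u (w, t)) z‖) :=
    ⟨B₁, by rintro _ ⟨z, rfl⟩; exact hvB' z⟩
  have hfin := static_commutator K (fun z => f (z, t)) (fun z => u (z, t)) x
    (⨆ z : E2, |f (z, t)|) B₀ A₁ (⨆ z : E2, ‖fderiv ℝ (fun w => u (w, t)) z‖)
    hK hKi hDK hxDK (hg t) hv (fun z => hdiv z t) (fun z => le_ciSup hbF z) hgA'
    (fun z => hB₀ z t htb) (fun z => le_ciSup hbU z)
  refine hfin.trans ?_
  have hF0 : 0 ≤ ⨆ z : E2, |f (z, t)| := Real.iSup_nonneg fun _ => abs_nonneg _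
  have hU0 : 0 ≤ ⨆ z : E2, ‖fderiv ℝ (fun w => u (w, t)) z‖ := Real.iSup_nonneg fun _ => norm_nonneg _
  refine (mul_le_mul_of_nonneg_left hbd (mul_nonneg hU0 hF0)).trans (le_of_eq ?_)
  ring
end
end
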